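/- arXiv:1411.6716 — 5 statements merged into one kernel-verified Lean document; each statement's English description precedes it below -/
import Mathlib

section
/- Let A be a real symmetric positive definite matrix whose rows and columns are indexed by multi-indices u with 1 ≤ u_k ≤ J_k (k = 1,…,d), and suppose A is q-banded for some q ∈ ℕ^d and all eigenvalues of A lie in [a,b] with 0 < a < b. Set λ = ((√(b/a) − 1)/(√(b/a) + 1))^{1/(q_1+⋯+q_d)} ∈ (0,1) and C = max{(1+√(b/a))²/(2b), 1/a}. Then for all multi-indices u, v: |(A^{−1})_{u,v}| ≤ C λ^{Σ_{k=1}^d |u_k − v_k|}. -/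
/-- A real matrix indexed by multi-indices `u` with `u k` ranging over `Fin (J k)`
(representing `1 ≤ u_k ≤ J_k`) is `h`-banded if its `(u,v)` entry vanishes whenever
`|u_k − v_k| > h_k` for some `k`. -/
def IsBanded {d : ℕ} (J : Fin d → ℕ) (h : Fin d → ℕ)
    (A : Matrix ((k : Fin d) → Fin (J k)) ((k : Fin d) → Fin (J k)) ℝ) : Prop :=
  ∀ u v : (k : Fin d) → Fin (J k),
    (∃ k : Fin d, (h k : ℤ) < |((u k : ℕ) : ℤ) - ((v k : ℕ) : ℤ)|) → A u v = 0

/-!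
If `p` is a polynomial of degree at most `m`, then `p(A)` has bandwidth at most `m` times that of
`A`, so its `(u, v)` entry vanishes as soon as `u` and `v` are further apart than this. Hence
`|(A⁻¹)_{u,v}| ≤ ‖A⁻¹ - p(A)‖ ≤ max_{x ∈ [a, b]} |x⁻¹ - p x|`, and by Chebyshev's explicit best
approximation of `x⁻¹` on `[a, b]` the right-hand side is geometrically small in `m`. The bound
follows by taking `m` as large as the distance between `u` and `v` permits.
-/

open Polynomial

section ChebyshevResidual

/-- The polynomial which, for real `r`, has value `Re (z ^ (n - 1) * (z + r) ^ 2)` at `Re z` for `z`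
on the unit circle. For `0 < r < 1` it is, up to an affine change of variable and normalization, the
residual `1 - x * p x` of the best uniform approximation `p` of degree `n` to `x⁻¹` on a positive
interval. -/
noncomputable def chebyshevResidual {R : Type*} [CommRing R] (r : R) (n : ℤ) : R[X] :=
  Chebyshev.T R (n + 1) + C (2 * r) * Chebyshev.T R n + C (r ^ 2) * Chebyshev.T R (n - 1)

theorem map_chebyshevResidual {R S : Type*} [CommRing R] [CommRing S] (f : R →+* S) (r : R)
    (n : ℤ) : (chebyshevResidual r n).map f = chebyshevResidual (f r) n := by
  simp [chebyshevResidual, map_ofNat]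

theorem natDegree_chebyshevResidual_le {R : Type*} [CommRing R] [IsDomain R] [NeZero (2 : R)]
    (r : R) (n : ℕ) : (chebyshevResidual r n).natDegree ≤ n + 1 := by
  have natDegree_T_le {k : ℤ} (hk : k.natAbs ≤ n + 1) :
      (Chebyshev.T R k).natDegree ≤ n + 1 := by rwa [Chebyshev.natDegree_T]
  refine natDegree_add_le_of_degree_le (natDegree_add_le_of_degree_le ?_ ?_) ?_
  · exact natDegree_T_le (by lia)
  · exact (natDegree_C_mul_le _ _).trans (natDegree_T_le (by lia))
  · exact (natDegree_C_mul_le _ _).trans (natDegree_T_le (by lia))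

section Field

variable {K : Type*} [Field K] [NeZero (2 : K)]

theorem eval_chebyshevT_add_inv_div_two {z : K} (hz : z ≠ 0) (n : ℤ) :
    (Chebyshev.T K n).eval ((z + z⁻¹) / 2) = (z ^ n + z ^ (-n)) / 2 := by
  have h2 : (2 : K) ≠ 0 := NeZero.ne 2
  induction n using Chebyshev.induct' with
  | zero => simp
  | one => simp
  | add_two n ih₁ ih₀ =>
    simp only [Chebyshev.T_add_two, eval_sub, eval_mul, eval_ofNat, eval_X, ih₁, ih₀, neg_add,
      zpow_add₀ hz, zpow_neg, zpow_one]
    field_simp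
    ring
  | neg n ih => rw [Chebyshev.T_neg, ih, neg_neg, add_comm]

theorem eval_chebyshevResidual_add_inv_div_two (r : K) {z : K} (hz : z ≠ 0) (n : ℤ) :
    (chebyshevResidual r n).eval ((z + z⁻¹) / 2) =
      (z ^ (n - 1) * (z + r) ^ 2 + z ^ (-(n - 1)) * (z⁻¹ + r) ^ 2) / 2 := by
  have h2 : (2 : K) ≠ 0 := NeZero.ne 2
  simp only [chebyshevResidual, eval_add, eval_mul, eval_C, eval_chebyshevT_add_inv_div_two hz,
    neg_add, neg_sub, zpow_add₀ hz, zpow_sub₀ hz, zpow_neg, zpow_one]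
  field_simp
  ring

theorem eval_chebyshevResidual_neg_add_inv_div_two {r : K} (hr : r ≠ 0) (n : ℕ) :
    (chebyshevResidual r n).eval (-(r + r⁻¹) / 2) =
      (-r⁻¹) ^ (n + 1) * (1 - r ^ 2) ^ 2 / 2 := by
  -- The point is the image of `z = -r⁻¹`, for which `z⁻¹ + r = 0`.
  have hz : -r⁻¹ ≠ 0 := neg_ne_zero.2 (inv_ne_zero hr)
  have hpoint : -(r + r⁻¹) / 2 = (-r⁻¹ + (-r⁻¹)⁻¹) / 2 := by rw [inv_neg, inv_inv]; ring
  rw [hpoint, eval_chebyshevResidual_add_inv_div_two r hz, inv_neg, inv_inv, neg_add_cancel,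
    zpow_sub_one₀ hz, zpow_natCast, zero_pow two_ne_zero, mul_zero, add_zero, pow_succ _ n, inv_neg,
    inv_inv]
  generalize (-r⁻¹) ^ n = t
  field_simp
  ring

end Field

theorem norm_eval_chebyshevResidual_re_le (r : ℝ) {z : ℂ} (hz : ‖z‖ = 1) (n : ℤ) :
    ‖(chebyshevResidual (r : ℂ) n).eval (z.re : ℂ)‖ ≤ ‖z + r‖ ^ 2 := by
  have hz_ne : z ≠ 0 := norm_ne_zero_iff.1 (hz ▸ one_ne_zero)
  have hz_inv : z⁻¹ = starRingEnd ℂ z := Complex.inv_eq_conj hz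
  have hz_re : (z.re : ℂ) = (z + z⁻¹) / 2 := by rw [hz_inv, Complex.re_eq_add_conj]
  have hnorm_inv : ‖z⁻¹ + r‖ = ‖z + r‖ := by
    rw [hz_inv, ← Complex.norm_conj (z + r), map_add, Complex.conj_ofReal]
  calc ‖(chebyshevResidual (r : ℂ) n).eval (z.re : ℂ)‖
      = ‖z ^ (n - 1) * (z + r) ^ 2 + z ^ (-(n - 1)) * (z⁻¹ + r) ^ 2‖ / 2 := by
        rw [hz_re, eval_chebyshevResidual_add_inv_div_two (r : ℂ) hz_ne, norm_div, Complex.norm_two]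
    _ ≤ (‖z + r‖ ^ 2 + ‖z + r‖ ^ 2) / 2 := by
        gcongr
        refine (norm_add_le _ _).trans_eq ?_
        simp only [norm_mul, norm_zpow, norm_pow, hz, one_zpow, one_mul, hnorm_inv]
    _ = ‖z + r‖ ^ 2 := add_self_div_two _

theorem abs_eval_chebyshevResidual_le (r : ℝ) {y : ℝ} (hy : |y| ≤ 1) (n : ℤ) :
    |(chebyshevResidual r n).eval y| ≤ 1 + 2 * r * y + r ^ 2 := by
  set z : ℂ := Complex.exp (Real.arccos y * Complex.I) with hz
  have hz_norm : ‖z‖ = 1 := Complex.norm_exp_ofReal_mul_I _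
  have hz_re : z.re = y := by
    rw [hz, Complex.exp_ofReal_mul_I_re, Real.cos_arccos (neg_le_of_abs_le hy) (le_of_abs_le hy)]
  calc |(chebyshevResidual r n).eval y|
      = ‖(chebyshevResidual (r : ℂ) n).eval (z.re : ℂ)‖ := by
        rw [hz_re, ← Complex.ofRealHom_eq_coe r, ← map_chebyshevResidual,
          ← Complex.ofRealHom_eq_coe y, eval_map_apply, Complex.ofRealHom_eq_coe,
          Complex.norm_real, Real.norm_eq_abs]
    _ ≤ ‖z + r‖ ^ 2 := norm_eval_chebyshevResidual_re_le r hz_norm n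
    _ = 1 + 2 * r * y + r ^ 2 := by
        rw [Complex.sq_norm, Complex.normSq_add, Complex.conj_ofReal, Complex.re_mul_ofReal,
          Complex.normSq_ofReal, Complex.normSq_eq_norm_sq, hz_norm, hz_re]
        ring

end ChebyshevResidual

section InverseApproximation

theorem exists_inv_sub_eval_eq_eval_div {K : Type*} [Field K] {R : K[X]} {n : ℕ}
    (hdeg : R.natDegree ≤ n + 1) (hR : R.eval 0 = 1) :
    ∃ p : K[X], p.natDegree ≤ n ∧ ∀ x ≠ 0, x⁻¹ - p.eval x = R.eval x / x := by
  refine ⟨(1 - R).divX, ?_, fun x hx => ?_⟩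
  · rw [natDegree_divX_eq_natDegree_tsub_one]
    have := (natDegree_sub_le (1 : K[X]) R).trans (by simpa using hdeg)
    lia
  · have hdivX := congrArg (eval x) (divX_mul_X_add (1 - R))
    simp only [coeff_zero_eq_eval_zero, eval_add, eval_mul, eval_X, eval_C, eval_sub, eval_one, hR,
      sub_self, add_zero] at hdivX
    field_simp
    linear_combination -hdivX

theorem exists_eval_zero_eq_one_and_abs_eval_le {c r : ℝ} (hc : 0 < c) (hr₀ : 0 < r) (hr₁ : r < 1)
    (n : ℕ) :
    ∃ R : ℝ[X], R.natDegree ≤ n + 1 ∧ R.eval 0 = 1 ∧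
      ∀ x ∈ Set.Icc (c * (1 - r) ^ 2) (c * (1 + r) ^ 2),
        |R.eval x| ≤ 2 / (c * (1 - r ^ 2) ^ 2) * r ^ (n + 1) * x := by
  -- The substitution `x = c * (1 + 2 * r * y + r ^ 2)` maps `[-1, 1]` onto the interval and
  -- turns the bound on the residual into a multiple of `x`.
  set y : ℝ[X] := C (2 * c * r)⁻¹ * X - C ((r + r⁻¹) / 2) with hy
  set δ : ℝ := (-r⁻¹) ^ (n + 1) * (1 - r ^ 2) ^ 2 / 2 with hδ
  have hr_sq : 0 < 1 - r ^ 2 := by nlinarith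
  have hδ_abs : |δ|⁻¹ = 2 / (1 - r ^ 2) ^ 2 * r ^ (n + 1) := by
    rw [hδ, abs_div, abs_mul, abs_pow, abs_neg, abs_inv, abs_of_pos hr₀,
      abs_of_pos (pow_pos hr_sq 2), abs_two, inv_pow]
    field_simp
  have hδ_ne : δ ≠ 0 := by rw [← abs_pos, ← inv_pos, hδ_abs]; positivity
  have hy_deg : y.natDegree ≤ 1 := by rw [hy]; compute_degree
  have hy_zero : y.eval 0 = -(r + r⁻¹) / 2 := by
    simp only [hy, eval_sub, eval_mul, eval_C, eval_X]; ring
  have hx_eq (x : ℝ) : x = c * (1 + 2 * r * y.eval x + r ^ 2) := by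
    simp only [hy, eval_sub, eval_mul, eval_C, eval_X]
    field_simp
    ring
  refine ⟨C δ⁻¹ * (chebyshevResidual r n).comp y, ?_, ?_, fun x ⟨hx₁, hx₂⟩ => ?_⟩
  · refine (natDegree_C_mul_le _ _).trans (natDegree_comp_le.trans ?_)
    simpa using Nat.mul_le_mul (natDegree_chebyshevResidual_le r n) hy_deg
  · rw [eval_mul, eval_C, eval_comp, hy_zero, eval_chebyshevResidual_neg_add_inv_div_two hr₀.ne',
      inv_mul_cancel₀ hδ_ne]
  · have hy_mem : |y.eval x| ≤ 1 := by
      have hcr : 0 < c * r := by positivity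
      rw [hx_eq x] at hx₁ hx₂
      rw [abs_le]
      constructor <;> nlinarith
    have hx_div : 1 + 2 * r * y.eval x + r ^ 2 = x / c :=
      eq_div_of_mul_eq hc.ne' ((mul_comm _ _).trans (hx_eq x).symm)
    calc |(C δ⁻¹ * (chebyshevResidual r n).comp y).eval x|
        = |δ|⁻¹ * |(chebyshevResidual r n).eval (y.eval x)| := by
          rw [eval_mul, eval_C, eval_comp, abs_mul, abs_inv]
      _ ≤ |δ|⁻¹ * (x / c) := by
          rw [← hx_div]
          gcongr
          exact abs_eval_chebyshevResidual_le r hy_mem n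
      _ = 2 / (c * (1 - r ^ 2) ^ 2) * r ^ (n + 1) * x := by rw [hδ_abs]; field_simp

theorem exists_abs_inv_sub_eval_le {a b : ℝ} (ha : 0 < a) (hab : a ≤ b) (n : ℕ) :
    ∃ p : ℝ[X], p.natDegree ≤ n ∧ ∀ x ∈ Set.Icc a b,
      |x⁻¹ - p.eval x| ≤
        (1 + √(b / a)) ^ 2 / (2 * b) * ((√(b / a) - 1) / (√(b / a) + 1)) ^ (n + 1) := by
  obtain rfl | hlt := hab.eq_or_lt
  · exact ⟨C a⁻¹, by simp, fun x hx => by simp [le_antisymm hx.2 hx.1, ha.ne']⟩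
  have hb₀ : 0 < b := ha.trans hlt
  set s := √(b / a) with hs
  have hs₁ : 1 < s := by rwa [hs, Real.lt_sqrt zero_le_one, one_pow, one_lt_div ha]
  have hb : b = a * s ^ 2 := by
    rw [hs, Real.sq_sqrt (by positivity), mul_div_cancel₀ _ ha.ne']
  set r := (s - 1) / (s + 1) with hr
  set c := a * (s + 1) ^ 2 / 4 with hc
  have hr₀ : 0 < r := div_pos (by linarith) (by linarith)
  have hr₁ : r < 1 := by rw [hr, div_lt_one (by linarith)]; linarith
  have hleft : c * (1 - r) ^ 2 = a := by rw [hc, hr]; field_simp; ring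
  have hright : c * (1 + r) ^ 2 = b := by rw [hc, hr, hb]; field_simp; ring
  have hconst : 2 / (c * (1 - r ^ 2) ^ 2) = (1 + s) ^ 2 / (2 * b) := by
    have : 1 - r ^ 2 = 4 * s / (s + 1) ^ 2 := by rw [hr]; field_simp; ring
    rw [this, hc, hb]; field_simp; ring
  obtain ⟨R, hR_deg, hR_zero, hR⟩ :=
    exists_eval_zero_eq_one_and_abs_eval_le (c := c) (by positivity) hr₀ hr₁ n
  rw [hleft, hright, hconst] at hR
  obtain ⟨p, hp_deg, hp⟩ := exists_inv_sub_eval_eq_eval_div hR_deg hR_zero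
  refine ⟨p, hp_deg, fun x hx => ?_⟩
  have hx₀ : 0 < x := ha.trans_le hx.1
  rw [hp x hx₀.ne', abs_div, abs_of_pos hx₀, div_le_iff₀ hx₀]
  exact hR x hx

end InverseApproximation

section FunctionalCalculus

theorem norm_ringInverse_sub_aeval_le {𝓐 : Type*} [NormedRing 𝓐] [StarRing 𝓐] [NormedAlgebra ℝ 𝓐]
    [IsometricContinuousFunctionalCalculus ℝ 𝓐 IsSelfAdjoint] {t : 𝓐} (ht : IsSelfAdjoint t)
    (ht_unit : IsUnit t) (p : ℝ[X]) {M : ℝ} (hM : 0 ≤ M)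
    (hp : ∀ x ∈ spectrum ℝ t, |x⁻¹ - p.eval x| ≤ M) :
    ‖Ring.inverse t - aeval t p‖ ≤ M := by
  have hinv : ContinuousOn (fun x : ℝ => x⁻¹) (spectrum ℝ t) :=
    continuousOn_inv₀.mono fun x hx => by
      rintro rfl
      exact spectrum.zero_notMem ℝ ht_unit hx
  rw [← cfc_ringInverse_id (R := ℝ) t ht_unit, ← cfc_polynomial p t,
    ← cfc_sub (fun x : ℝ => x⁻¹) p.eval t hinv]
  exact norm_cfc_le hM hp

open scoped Matrix.Norms.L2Operator

variable {n 𝕜 : Type*} [Fintype n] [DecidableEq n] [RCLike 𝕜]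

theorem norm_matrix_apply_le_l2_opNorm (A : Matrix n n 𝕜) (u v : n) : ‖A u v‖ ≤ ‖A‖ := by
  calc ‖A u v‖ = ‖Matrix.toEuclideanCLM (𝕜 := 𝕜) A (EuclideanSpace.single v 1) u‖ := by
        simp
    _ ≤ ‖Matrix.toEuclideanCLM (𝕜 := 𝕜) A (EuclideanSpace.single v 1)‖ := PiLp.norm_apply_le _ u
    _ ≤ ‖A‖ * ‖EuclideanSpace.single v (1 : 𝕜)‖ := ContinuousLinearMap.le_opNorm _ _
    _ = ‖A‖ := by simp

theorem norm_inv_apply_sub_aeval_apply_le {A : Matrix n n 𝕜} (hA : A.IsHermitian) {s : Set ℝ}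
    (hspec : spectrum ℝ A ⊆ s) (hs : (0 : ℝ) ∉ s) (p : ℝ[X]) {M : ℝ}
    (hp : ∀ x ∈ s, |x⁻¹ - p.eval x| ≤ M) (u v : n) :
    ‖A⁻¹ u v - aeval A p u v‖ ≤ M := by
  have : Nonempty n := ⟨u⟩
  have hA_unit : IsUnit A := (spectrum.zero_notMem_iff ℝ).1 fun h => hs (hspec h)
  let _ : NormedAlgebra ℝ (Matrix n n 𝕜) :=
    { norm_smul_le := fun t B => by
        rw [← algebraMap_smul 𝕜 t B, ← norm_algebraMap' 𝕜 t]
        exact norm_smul_le _ B }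
  have hM : 0 ≤ M := by
    obtain ⟨t, ht⟩ := ContinuousFunctionalCalculus.spectrum_nonempty (R := ℝ) A hA
    exact (abs_nonneg _).trans (hp t (hspec ht))
  calc ‖A⁻¹ u v - aeval A p u v‖
      ≤ ‖A⁻¹ - aeval A p‖ := norm_matrix_apply_le_l2_opNorm (A⁻¹ - aeval A p) u v
    _ ≤ M := by
        rw [Matrix.nonsing_inv_eq_ringInverse]
        exact norm_ringInverse_sub_aeval_le hA hA_unit p hM fun x hx => hp x (hspec hx)

end FunctionalCalculus

section Bandwidth

variable {n E : Type*} [PseudoMetricSpace E]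

/-- A square matrix whose indices are placed in a metric space by `x` has bandwidth at most `w` if
its entries vanish between indices placed more than `w` apart. -/
def HasBandwidthLE {R : Type*} [Zero R] (x : n → E) (w : ℝ) (A : Matrix n n R) : Prop :=
  ∀ ⦃u v⦄, w < dist (x u) (x v) → A u v = 0

namespace HasBandwidthLE

variable {x : n → E} {w w' : ℝ}

theorem mono {R : Type*} [Zero R] {A : Matrix n n R} (hA : HasBandwidthLE x w A) (hw : w ≤ w') :
    HasBandwidthLE x w' A :=
  fun _ _ h => hA (hw.trans_lt h)

theorem one [DecidableEq n] {R : Type*} [Zero R] [One R] :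
    HasBandwidthLE x 0 (1 : Matrix n n R) :=
  fun _ _ h => Matrix.one_apply_ne fun huv => by simp [huv] at h

theorem mul [Fintype n] {R : Type*} [NonUnitalNonAssocSemiring R] {A B : Matrix n n R}
    (hA : HasBandwidthLE x w A) (hB : HasBandwidthLE x w' B) :
    HasBandwidthLE x (w + w') (A * B) := fun u v h => by
  rw [Matrix.mul_apply]
  refine Finset.sum_eq_zero fun k _ => ?_
  obtain huk | hkv := lt_or_lt_of_add_lt_add (h.trans_le (dist_triangle (x u) (x k) (x v)))
  · rw [hA huk, zero_mul]
  · rw [hB hkv, mul_zero]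

theorem pow [Fintype n] [DecidableEq n] {R : Type*} [Semiring R] {A : Matrix n n R}
    (hA : HasBandwidthLE x w A) (k : ℕ) : HasBandwidthLE x (k * w) (A ^ k) := by
  induction k with
  | zero => simpa using one
  | succ k ih => simpa [pow_succ, add_mul] using ih.mul hA

theorem aeval [Fintype n] [DecidableEq n] {R S : Type*} [CommSemiring R] [Semiring S] [Algebra R S]
    {A : Matrix n n S} (hA : HasBandwidthLE x w A) (hw : 0 ≤ w) (p : R[X]) :
    HasBandwidthLE x (p.natDegree * w) (Polynomial.aeval A p) := fun u v h => by
  rw [aeval_eq_sum_range, Matrix.sum_apply]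
  refine Finset.sum_eq_zero fun k hk => ?_
  have hk_le : (k : ℝ) * w ≤ p.natDegree * w := by
    gcongr
    exact Finset.mem_range_succ_iff.1 hk
  rw [Matrix.smul_apply, (hA.pow k).mono hk_le h, smul_zero]

end HasBandwidthLE

end Bandwidth

section DecayOfInverse

variable {n 𝕜 E : Type*} [Fintype n] [DecidableEq n] [RCLike 𝕜] [PseudoMetricSpace E]
  {x : n → E} {w a b : ℝ} {A : Matrix n n 𝕜}

theorem norm_inv_apply_le_one_div (hA : A.IsHermitian) (ha : 0 < a)
    (hspec : spectrum ℝ A ⊆ Set.Ici a) (u v : n) : ‖A⁻¹ u v‖ ≤ 1 / a := by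
  have hbound (t : ℝ) (ht : t ∈ Set.Ici a) : |t⁻¹ - (0 : ℝ[X]).eval t| ≤ 1 / a := by
    have ht₀ : 0 < t := ha.trans_le ht
    rw [eval_zero, sub_zero, abs_of_pos (inv_pos.2 ht₀), inv_eq_one_div]
    exact one_div_le_one_div_of_le ha ht
  simpa using norm_inv_apply_sub_aeval_apply_le hA hspec ha.not_ge 0 hbound u v

theorem norm_inv_apply_le_of_nat_mul_lt_dist (hA : A.IsHermitian) (ha : 0 < a) (hab : a ≤ b)
    (hspec : spectrum ℝ A ⊆ Set.Icc a b) (hw : 0 ≤ w) (hband : HasBandwidthLE x w A)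
    (m : ℕ) {u v : n} (huv : m * w < dist (x u) (x v)) :
    ‖A⁻¹ u v‖ ≤
      (1 + √(b / a)) ^ 2 / (2 * b) * ((√(b / a) - 1) / (√(b / a) + 1)) ^ (m + 1) := by
  obtain ⟨p, hp_deg, hp⟩ := exists_abs_inv_sub_eval_le ha hab m
  have hp_zero : aeval A p u v = 0 := hband.aeval hw p (huv.trans_le' (by gcongr))
  simpa [hp_zero] using
    norm_inv_apply_sub_aeval_apply_le hA hspec (fun h => ha.not_ge h.1) p hp u v

theorem statement2_general (hA : A.IsHermitian) (ha : 0 < a) (hspec : spectrum ℝ A ⊆ Set.Icc a b)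
    (hw : 0 < w) (hband : HasBandwidthLE x w A) (u v : n) :
    ‖A⁻¹ u v‖ ≤
      max ((1 + √(b / a)) ^ 2 / (2 * b)) (1 / a) *
        (((√(b / a) - 1) / (√(b / a) + 1)) ^ (1 / w)) ^ dist (x u) (x v) := by
  have : Nonempty n := ⟨u⟩
  have hab : a ≤ b := by
    obtain ⟨t, ht⟩ := ContinuousFunctionalCalculus.spectrum_nonempty (R := ℝ) A hA
    exact (hspec ht).1.trans (hspec ht).2
  have hb : 0 < b := ha.trans_le hab
  set s := √(b / a) with hs
  have hs₁ : 1 ≤ s := by rwa [hs, Real.one_le_sqrt, one_le_div ha]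
  have hr₀ : 0 ≤ (s - 1) / (s + 1) := div_nonneg (by linarith) (by linarith)
  have hr₁ : (s - 1) / (s + 1) ≤ 1 := by rw [div_le_one (by linarith)]; linarith
  set r := (s - 1) / (s + 1)
  rw [← Real.rpow_mul hr₀, one_div_mul_eq_div]
  obtain hzero | hpos := (div_nonneg dist_nonneg hw.le : 0 ≤ dist (x u) (x v) / w).eq_or_lt
  · rw [← hzero, Real.rpow_zero, mul_one]
    exact (norm_inv_apply_le_one_div hA ha (hspec.trans Set.Icc_subset_Ici_self) u v).trans
      (le_max_right _ _)
  -- `m + 1 = ⌈dist (x u) (x v) / w⌉`, so polynomials of degree `m` in `A` vanish at `(u, v)`.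
  obtain ⟨m, hm⟩ := Nat.exists_eq_succ_of_ne_zero (Nat.ceil_pos.2 hpos).ne'
  have hm_lt : m * w < dist (x u) (x v) := by
    rw [← lt_div_iff₀ hw, ← Nat.lt_ceil, hm]
    exact m.lt_succ_self
  calc ‖A⁻¹ u v‖ ≤ (1 + s) ^ 2 / (2 * b) * r ^ (m + 1) :=
        norm_inv_apply_le_of_nat_mul_lt_dist hA ha hab hspec hw.le hband m hm_lt
    _ = (1 + s) ^ 2 / (2 * b) * r ^ ((m + 1 : ℕ) : ℝ) := by rw [Real.rpow_natCast]
    _ ≤ max ((1 + s) ^ 2 / (2 * b)) (1 / a) * r ^ (dist (x u) (x v) / w) := by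
        gcongr ?_ * ?_
        · exact le_max_left _ _
        · exact Real.rpow_le_rpow_of_exponent_ge' hr₀ hr₁ hpos.le
            ((Nat.le_ceil _).trans_eq (by rw [hm]))

end DecayOfInverse

section MultiIndex

variable {d : ℕ} {J : Fin d → ℕ}

/-- The position of a multi-index in `ℝ^d` with the `ℓ¹` norm. -/
noncomputable def multiIndexPoint (u : (k : Fin d) → Fin (J k)) : PiLp 1 fun _ : Fin d => ℝ :=
  WithLp.toLp 1 fun k => ((u k : ℕ) : ℝ)

theorem dist_multiIndexPoint (u v : (k : Fin d) → Fin (J k)) :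
    dist (multiIndexPoint u) (multiIndexPoint v) =
      ((∑ k, (((u k : ℕ) : ℤ) - ((v k : ℕ) : ℤ)).natAbs : ℕ) : ℝ) := by
  rw [PiLp.dist_eq_of_L1]
  simp [multiIndexPoint, Real.dist_eq, Nat.cast_natAbs]

theorem IsBanded.hasBandwidthLE {q : Fin d → ℕ}
    {A : Matrix ((k : Fin d) → Fin (J k)) ((k : Fin d) → Fin (J k)) ℝ} (hA : IsBanded J q A) :
    HasBandwidthLE multiIndexPoint (∑ k, (q k : ℝ)) A := fun u v h => by
  rw [dist_multiIndexPoint] at h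
  obtain ⟨k, -, hk⟩ := Finset.exists_lt_of_sum_lt (by exact_mod_cast h)
  exact hA u v ⟨k, by rw [Int.abs_eq_natAbs]; exact_mod_cast hk⟩

end MultiIndex

/-- If `A` is symmetric positive definite, `q`-banded, with all
eigenvalues in `[a,b]`, `0 < a < b`, then, with
`λ = ((√(b/a) − 1)/(√(b/a) + 1))^(1/(q_1+⋯+q_d))` and
`C = max ((1+√(b/a))²/(2b)) (1/a)`, every entry of `A⁻¹` satisfies
`|(A⁻¹)_{u,v}| ≤ C · λ^(Σ_k |u_k − v_k|)`. -/
theorem statement2 {d : ℕ} (hd : 1 ≤ d) (J : Fin d → ℕ) (hJ : ∀ k, 1 ≤ J k)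
    (q : Fin d → ℕ) (hq : ∀ k, 1 ≤ q k)
    (A : Matrix ((k : Fin d) → Fin (J k)) ((k : Fin d) → Fin (J k)) ℝ)
    (hA : A.PosDef)
    (a b : ℝ) (ha : 0 < a) (hab : a < b)
    (heig : ∀ i, hA.1.eigenvalues i ∈ Set.Icc a b)
    (hband : IsBanded J q A) :
    ∀ u v : (k : Fin d) → Fin (J k),
      |A⁻¹ u v| ≤
        max ((1 + Real.sqrt (b / a)) ^ 2 / (2 * b)) (1 / a) *
          (((Real.sqrt (b / a) - 1) / (Real.sqrt (b / a) + 1)) ^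
              ((1 : ℝ) / ∑ k, (q k : ℝ))) ^
            (∑ k, (((u k : ℕ) : ℤ) - ((v k : ℕ) : ℤ)).natAbs) := by
  intro u v
  have hq_pos : 0 < ∑ k, (q k : ℝ) :=
    Finset.sum_pos (fun k _ => mod_cast hq k) ⟨⟨0, hd⟩, Finset.mem_univ _⟩
  have hspec : spectrum ℝ A ⊆ Set.Icc a b :=
    hA.1.spectrum_real_eq_range_eigenvalues ▸ Set.range_subset_iff.2 heig
  simpa only [Real.norm_eq_abs, dist_multiIndexPoint, Real.rpow_natCast] using
    statement2_general hA.1 ha hspec hq_pos hband.hasBandwidthLE u v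
end

section
/- Fix d ≥ 1, q ∈ ℕ^d and 0 < a < b. There is a constant C' > 0, depending only on a, b, q and d (not on J or on the matrix), with the following property: for every J = (J_1,…,J_d) ∈ ℕ^d, every τ > 0, and every real symmetric positive definite matrix A indexed by multi-indices 1 ≤ u_k ≤ J_k that is q-banded and has all its eigenvalues in [aτ, bτ], one has ‖A^{−1}‖_{(∞,∞)} ≤ C'/τ. -/
section SelfAdjoint

variable {R : Type*} [NormedRing R] [StarRing R] [NormedAlgebra ℝ R]
  [IsometricContinuousFunctionalCalculus ℝ R IsSelfAdjoint]

lemma norm_one_sub_inv_smul_le {x : R} (hx : IsSelfAdjoint x) {α β : ℝ}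
    (hβ : 0 < β) (hαβ : α ≤ β) (hspec : spectrum ℝ x ⊆ Set.Icc α β) :
    ‖1 - β⁻¹ • x‖ ≤ 1 - α / β := by
  have hcfc : cfc (fun t : ℝ => 1 - β⁻¹ * t) x = 1 - β⁻¹ • x := by
    rw [cfc_sub .., cfc_const_one .., cfc_const_mul .., cfc_id' ..]
  rw [← hcfc]
  refine norm_cfc_le (sub_nonneg.2 (div_le_one_of_le₀ hαβ hβ.le)) fun t ht => ?_
  obtain ⟨hαt, htβ⟩ := hspec ht
  have lower : α / β ≤ t / β := by gcongr
  have upper : t / β ≤ 1 := div_le_one_of_le₀ htβ hβ.le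
  rw [inv_mul_eq_div, Real.norm_of_nonneg (sub_nonneg.2 upper)]
  exact sub_le_sub_left lower 1

end SelfAdjoint

section RowSum

open scoped Matrix.Norms.L2Operator

variable {𝕜 m n : Type*} [RCLike 𝕜] [Fintype m] [Fintype n] [DecidableEq n]

lemma norm_apply_le_l2_opNorm (M : Matrix m n 𝕜) (u : m) (v : n) : ‖M u v‖ ≤ ‖M‖ := by
  calc ‖M u v‖ = ‖WithLp.toLp 2 (M.mulVec (EuclideanSpace.single v (1 : 𝕜))) u‖ := by simp
    _ ≤ ‖WithLp.toLp 2 (M.mulVec (EuclideanSpace.single v (1 : 𝕜)))‖ := PiLp.norm_apply_le _ u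
    _ ≤ ‖M‖ * ‖EuclideanSpace.single v (1 : 𝕜)‖ := Matrix.l2_opNorm_mulVec M _
    _ = ‖M‖ := by simp

lemma sum_norm_apply_le_ncard_mul_l2_opNorm (M : Matrix m n 𝕜) (u : m) :
    ∑ v, ‖M u v‖ ≤ Set.ncard {v | M u v ≠ 0} * ‖M‖ := by
  classical
  calc ∑ v, ‖M u v‖ = ∑ v with M u v ≠ 0, ‖M u v‖ := by
        simp [Finset.sum_filter_of_ne]
    _ ≤ ∑ v with M u v ≠ 0, ‖M‖ := Finset.sum_le_sum fun v _ => norm_apply_le_l2_opNorm M u v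
    _ = Set.ncard {v | M u v ≠ 0} * ‖M‖ := by
        rw [Finset.sum_const, nsmul_eq_mul, ← Set.ncard_coe_finset, Finset.coe_filter_univ]

lemma hasSum_pow_apply_inv_one_sub {B : Matrix n n 𝕜} (hB : ‖B‖ < 1) (u v : n) :
    HasSum (fun k : ℕ => (B ^ k) u v) ((1 - B)⁻¹ u v) := by
  have h := hasSum_geom_series_inverse B hB
  rw [← Matrix.nonsing_inv_eq_ringInverse] at h
  exact Pi.hasSum.1 (Pi.hasSum.1 h u) v

lemma sum_norm_inv_one_sub_apply_le {B : Matrix n n 𝕜} {r : ℝ} (hB : ‖B‖ ≤ r) (hr : r < 1)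
    {N : ℕ → ℝ} (hN : Summable fun k => N k * r ^ k) (u : n)
    (hcard : ∀ k, (Set.ncard {v | (B ^ k) u v ≠ 0} : ℝ) ≤ N k) :
    ∑ v, ‖(1 - B)⁻¹ u v‖ ≤ ∑' k, N k * r ^ k := by
  have : Nonempty n := ⟨u⟩
  have hr₀ : 0 ≤ r := (norm_nonneg B).trans hB
  have hpow (k : ℕ) : ‖B ^ k‖ ≤ r ^ k := (norm_pow_le B k).trans (by gcongr)
  have hsummable (v : n) : Summable fun k => ‖(B ^ k) u v‖ :=
    (summable_geometric_of_lt_one hr₀ hr).of_nonneg_of_le (fun _ => norm_nonneg _)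
      fun k => (norm_apply_le_l2_opNorm _ u v).trans (hpow k)
  have hrow (k : ℕ) : ∑ v, ‖(B ^ k) u v‖ ≤ N k * r ^ k :=
    (sum_norm_apply_le_ncard_mul_l2_opNorm (B ^ k) u).trans <|
      mul_le_mul (hcard k) (hpow k) (norm_nonneg _) ((Nat.cast_nonneg _).trans (hcard k))
  calc ∑ v, ‖(1 - B)⁻¹ u v‖ ≤ ∑ v, ∑' k, ‖(B ^ k) u v‖ := by
        refine Finset.sum_le_sum fun v _ => ?_
        rw [← (hasSum_pow_apply_inv_one_sub (hB.trans_lt hr) u v).tsum_eq]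
        exact norm_tsum_le_tsum_norm (hsummable v)
    _ = ∑' k, ∑ v, ‖(B ^ k) u v‖ := (Summable.tsum_finsetSum fun v _ => hsummable v).symm
    _ ≤ ∑' k, N k * r ^ k := (summable_sum fun v _ => hsummable v).tsum_le_tsum hrow hN

lemma l2_opNorm_one_sub_inv_smul_le {A : Matrix n n 𝕜} (hA : A.IsHermitian) {α β : ℝ}
    (hβ : 0 < β) (hαβ : α ≤ β) (hspec : spectrum ℝ A ⊆ Set.Icc α β) :
    ‖1 - β⁻¹ • A‖ ≤ 1 - α / β := by
  -- The `ℓ²` operator norm comes with a `NormedAlgebra` instance over `𝕜` only, not over `ℝ`.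
  let : NormedAlgebra ℝ (Matrix n n 𝕜) :=
    { (inferInstance : Algebra ℝ (Matrix n n 𝕜)) with
      norm_smul_le := fun c M => by
        rw [← algebraMap_smul 𝕜 c M]
        exact (norm_smul_le _ _).trans_eq (by rw [norm_algebraMap']) }
  exact norm_one_sub_inv_smul_le hA hβ hαβ hspec

lemma sum_norm_inv_apply_le {A : Matrix n n 𝕜} (hA : A.IsHermitian) {α β : ℝ} (hα : 0 < α)
    (hαβ : α ≤ β) (hspec : spectrum ℝ A ⊆ Set.Icc α β) {N : ℕ → ℝ}
    (hN : Summable fun k => N k * (1 - α / β) ^ k) (u : n)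
    (hcard : ∀ k, (Set.ncard {v | ((1 - β⁻¹ • A) ^ k) u v ≠ 0} : ℝ) ≤ N k) :
    ∑ v, ‖A⁻¹ u v‖ ≤ (∑' k, N k * (1 - α / β) ^ k) / β := by
  have hβ : 0 < β := hα.trans_le hαβ
  have hnorm : ‖1 - β⁻¹ • A‖ ≤ 1 - α / β :=
    l2_opNorm_one_sub_inv_smul_le hA hβ hαβ hspec
  have hlt : 1 - α / β < 1 := sub_lt_self 1 (div_pos hα hβ)
  have hunit : IsUnit (β⁻¹ • A) := by
    simpa only [sub_sub_cancel] using isUnit_one_sub_of_norm_lt_one (hnorm.trans_lt hlt)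
  have hinv : A⁻¹ = β⁻¹ • (β⁻¹ • A)⁻¹ := by
    refine Matrix.inv_eq_right_inv ?_
    rw [mul_smul_comm, ← smul_mul_assoc]
    exact Matrix.mul_nonsing_inv _ ((Matrix.isUnit_iff_isUnit_det _).1 hunit)
  have hrow : ∑ v, ‖(β⁻¹ • A)⁻¹ u v‖ ≤ ∑' k, N k * (1 - α / β) ^ k := by
    simpa only [sub_sub_cancel] using sum_norm_inv_one_sub_apply_le hnorm hlt hN u hcard
  calc ∑ v, ‖A⁻¹ u v‖ = (∑ v, ‖(β⁻¹ • A)⁻¹ u v‖) / β := by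
        simp only [hinv, div_eq_inv_mul, Finset.mul_sum, Matrix.smul_apply, norm_smul, norm_inv,
          Real.norm_of_nonneg hβ.le]
    _ ≤ (∑' k, N k * (1 - α / β) ^ k) / β := by gcongr

end RowSum

lemma card_filter_abs_fin_sub_le {J : ℕ} (u : Fin J) (m : ℕ) :
    (Finset.univ.filter fun x : Fin J => |((u : ℕ) : ℤ) - ((x : ℕ) : ℤ)| ≤ m).card ≤
      2 * m + 1 := by
  have hcard : (Finset.Icc (((u : ℕ) : ℤ) - m) (u + m)).card = 2 * m + 1 := by
    rw [Int.card_Icc]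
    lia
  rw [← hcard]
  refine Finset.card_le_card_of_injOn (fun x => ((x : ℕ) : ℤ)) (fun x hx => ?_)
    fun x _ y _ hxy => Fin.ext (Int.ofNat_inj.1 hxy)
  rw [Finset.mem_coe, Finset.mem_filter_univ, abs_le] at hx
  rw [Finset.mem_coe, Finset.mem_Icc]
  lia

lemma summable_prod_mul_geometric {ι : Type*} [Fintype ι] (q : ι → ℕ) {r : ℝ} (hr₀ : 0 ≤ r)
    (hr : r < 1) :
    Summable fun m : ℕ => (∏ i, (2 * (m • q) i + 1) : ℕ) * r ^ m := by
  have hnorm : ‖r‖ < 1 := by rwa [Real.norm_of_nonneg hr₀]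
  refine (summable_norm_mul_geometric_of_norm_lt_one (k := Fintype.card ι) hnorm ?_).of_norm
  refine Asymptotics.IsBigO.of_bound (∏ i, (2 * q i + 1) : ℕ) ?_
  filter_upwards [Filter.eventually_ge_atTop 1] with m hm
  rw [Real.norm_natCast, Real.norm_natCast]
  norm_cast
  calc ∏ i, (2 * (m • q) i + 1) ≤ ∏ i, (2 * q i + 1) * m :=
        Finset.prod_le_prod' fun i _ => by
          rw [Pi.smul_apply, smul_eq_mul]
          nlinarith
    _ = (∏ i, (2 * q i + 1)) * m ^ Fintype.card ι := by
        rw [Finset.prod_mul_distrib, Finset.prod_const, Finset.card_univ]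

namespace IsBanded

variable {d : ℕ} {J p q : Fin d → ℕ}
  {A B : Matrix ((k : Fin d) → Fin (J k)) ((k : Fin d) → Fin (J k)) ℝ}

lemma one (J q : Fin d → ℕ) : IsBanded J q 1 := by
  rintro u v ⟨k, hk⟩
  refine Matrix.one_apply_ne ?_
  rintro rfl
  rw [sub_self, abs_zero] at hk
  exact absurd hk (Int.natCast_nonneg _).not_gt

lemma smul (c : ℝ) (hA : IsBanded J q A) : IsBanded J q (c • A) := fun u v huv => by
  rw [Matrix.smul_apply, hA u v huv, smul_zero]

lemma sub (hA : IsBanded J q A) (hB : IsBanded J q B) : IsBanded J q (A - B) := fun u v huv => by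
  rw [Matrix.sub_apply, hA u v huv, hB u v huv, sub_zero]

lemma mul (hA : IsBanded J p A) (hB : IsBanded J q B) : IsBanded J (p + q) (A * B) := by
  rintro u v ⟨k, hk⟩
  refine Finset.sum_eq_zero fun w _ => ?_
  have htri := abs_sub_le ((u k : ℕ) : ℤ) (w k : ℕ) (v k : ℕ)
  rw [Pi.add_apply, Nat.cast_add] at hk
  rcases lt_or_lt_of_add_lt_add (hk.trans_le htri) with huw | hwv
  · exact mul_eq_zero_of_left (hA u w ⟨k, huw⟩) _
  · exact mul_eq_zero_of_right _ (hB w v ⟨k, hwv⟩)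

lemma pow (hA : IsBanded J q A) (m : ℕ) : IsBanded J (m • q) (A ^ m) := by
  induction m with
  | zero => exact pow_zero A ▸ one J _
  | succ m ih =>
    rw [pow_succ, succ_nsmul]
    exact ih.mul hA

lemma ncard_row_support_le (hA : IsBanded J q A) (u : (k : Fin d) → Fin (J k)) :
    Set.ncard {v | A u v ≠ 0} ≤ ∏ k, (2 * q k + 1) := by
  let box := Fintype.piFinset fun k =>
    Finset.univ.filter fun x : Fin (J k) => |((u k : ℕ) : ℤ) - ((x : ℕ) : ℤ)| ≤ q k
  have hsub : {v | A u v ≠ 0} ⊆ (box : Set ((k : Fin d) → Fin (J k))) := by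
    intro v hv
    simp only [box, Finset.mem_coe, Fintype.mem_piFinset, Finset.mem_filter_univ]
    by_contra! hfar
    exact hv (hA u v hfar)
  calc Set.ncard {v | A u v ≠ 0} ≤ box.card :=
        (Set.ncard_le_ncard hsub).trans_eq (Set.ncard_coe_finset box)
    _ ≤ ∏ k, (2 * q k + 1) := by
        rw [Fintype.card_piFinset]
        exact Finset.prod_le_prod' fun k _ => card_filter_abs_fin_sub_le (u k) (q k)

lemma sum_abs_inv_apply_le (hband : IsBanded J q A) (hA : A.IsHermitian) {α β : ℝ}
    (hα : 0 < α) (hαβ : α ≤ β) (hspec : spectrum ℝ A ⊆ Set.Icc α β)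
    (u : (k : Fin d) → Fin (J k)) :
    ∑ v, |A⁻¹ u v| ≤
      (∑' m : ℕ, (∏ k, (2 * (m • q) k + 1) : ℕ) * (1 - α / β) ^ m) / β := by
  have hβ : 0 < β := hα.trans_le hαβ
  have hr₀ : 0 ≤ 1 - α / β := sub_nonneg.2 (div_le_one_of_le₀ hαβ hβ.le)
  have hr : 1 - α / β < 1 := sub_lt_self 1 (div_pos hα hβ)
  refine sum_norm_inv_apply_le hA hα hαβ hspec (summable_prod_mul_geometric q hr₀ hr) u fun m => ?_
  exact_mod_cast (((one J q).sub (hband.smul β⁻¹)).pow m).ncard_row_support_le u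

end IsBanded

/-- Fix `d ≥ 1`, `q ∈ ℕ^d` and `0 < a < b`. There is a constant `C' > 0`
depending only on `a, b, q, d` such that for every `J`, every `τ > 0` and every symmetric
positive definite `q`-banded matrix `A` (indexed by multi-indices `1 ≤ u_k ≤ J_k`) with all
eigenvalues in `[aτ, bτ]`, the `(∞,∞)`-operator norm of `A⁻¹` (the maximum over rows of the
sum of absolute values of the entries) is at most `C'/τ`. -/
theorem statement3 (d : ℕ) (hd : 1 ≤ d) (q : Fin d → ℕ) (hq : ∀ k, 1 ≤ q k)
    (a b : ℝ) (ha : 0 < a) (hab : a < b) :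
    ∃ C' > (0 : ℝ), ∀ (J : Fin d → ℕ), (∀ k, 1 ≤ J k) → ∀ τ : ℝ, 0 < τ →
      ∀ (A : Matrix ((k : Fin d) → Fin (J k)) ((k : Fin d) → Fin (J k)) ℝ)
        (hA : A.PosDef), IsBanded J q A →
        (∀ i, hA.1.eigenvalues i ∈ Set.Icc (a * τ) (b * τ)) →
        ∀ u : (k : Fin d) → Fin (J k), ∑ v, |A⁻¹ u v| ≤ C' / τ := by
  have hb : 0 < b := ha.trans hab
  have hr₀ : 0 < 1 - a / b := sub_pos.2 ((div_lt_one hb).2 hab)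
  have hr : 1 - a / b < 1 := sub_lt_self 1 (div_pos ha hb)
  have hpos : 0 < ∑' m : ℕ, (∏ k, (2 * (m • q) k + 1) : ℕ) * (1 - a / b) ^ m :=
    (summable_prod_mul_geometric q hr₀.le hr).tsum_pos (fun m => by positivity) 0 (by simp)
  refine ⟨_, div_pos hpos hb, fun J _ τ hτ A hA hband hev u => ?_⟩
  have hspec : spectrum ℝ A ⊆ Set.Icc (a * τ) (b * τ) := by
    rw [hA.1.spectrum_real_eq_range_eigenvalues]
    exact Set.range_subset_iff.2 hev
  have h := hband.sum_abs_inv_apply_le hA.1 (mul_pos ha hτ)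
    (mul_le_mul_of_nonneg_right hab.le hτ.le) hspec u
  rwa [mul_div_mul_right a b hτ.ne', ← div_div] at h
end

section
/- Let B be a real n × J matrix with BᵀB invertible (hence symmetric positive definite) and let Ω be a real J × J symmetric positive definite matrix. Define P_B = B(BᵀB)^{−1}Bᵀ and V = B(BᵀB)^{−1}[Ω + (BᵀB)^{−1}]^{−1}(BᵀB)^{−1}Bᵀ. Then Bᵀ(I_n − P_B + V)²B = [Ω + (BᵀB)^{−1}]^{−1}(BᵀB)^{−1}[Ω + (BᵀB)^{−1}]^{−1}, and in the Loewner order [Ω + (BᵀB)^{−1}]^{−1}(BᵀB)^{−1}[Ω + (BᵀB)^{−1}]^{−1} ≤ [Ω + (BᵀB)^{−1}]^{−1} ≤ BᵀB. -/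
open Matrix

/-!
Write `G = BᵀB` and `T = (Ω + G⁻¹)⁻¹`. On the column space of `B` the projection `P_B` is the
identity, so `W = I - P_B + V` satisfies `W B = B G⁻¹ T` and, on the other side, `Bᵀ W = T G⁻¹ Bᵀ`;
multiplying the two gives `T G⁻¹ T`. Both Loewner bounds come from `G⁻¹ ≤ Ω + G⁻¹`: conjugating it
by `T` gives `T G⁻¹ T ≤ T`, and inverting it gives `T ≤ G`.
-/

section ShrinkColumnSpace

variable {m n R : Type*} [Fintype m] [DecidableEq m] [Fintype n] [DecidableEq n] [CommRing R]

/-- The matrix `I - P_B + V`, with an arbitrary `C` in place of `Bᵀ` and an arbitrary `T` in place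
of `[Ω + (BᵀB)⁻¹]⁻¹`. For invertible `CB` the analogue of `P_B` is the oblique projection onto the
columns of `B` along `ker C`, and this matrix fixes `ker C` pointwise and maps `B x` to
`B (CB)⁻¹ T x`. If `CB` is singular then `(CB)⁻¹ = 0` and it is the identity. -/
noncomputable def shrinkColumnSpace (C : Matrix n m R) (B : Matrix m n R) (T : Matrix n n R) :
    Matrix m m R :=
  1 - B * (C * B)⁻¹ * C + B * (C * B)⁻¹ * T * (C * B)⁻¹ * C

variable {C : Matrix n m R} {B : Matrix m n R}

theorem shrinkColumnSpace_mul (hCB : IsUnit (C * B)) (T : Matrix n n R) :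
    shrinkColumnSpace C B T * B = B * (C * B)⁻¹ * T := by
  have hinv : (C * B)⁻¹ * (C * B) = 1 := nonsing_inv_mul _ ((isUnit_iff_isUnit_det _).1 hCB)
  calc shrinkColumnSpace C B T * B
      = B - B * ((C * B)⁻¹ * (C * B)) + B * (C * B)⁻¹ * T * ((C * B)⁻¹ * (C * B)) := by
        simp only [shrinkColumnSpace, Matrix.add_mul, Matrix.sub_mul, Matrix.one_mul,
          Matrix.mul_assoc]
    _ = B * (C * B)⁻¹ * T := by
        rw [hinv, Matrix.mul_one, Matrix.mul_one, sub_self, zero_add]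

theorem mul_shrinkColumnSpace (hCB : IsUnit (C * B)) (T : Matrix n n R) :
    C * shrinkColumnSpace C B T = T * (C * B)⁻¹ * C := by
  have hinv : C * B * (C * B)⁻¹ = 1 := mul_nonsing_inv _ ((isUnit_iff_isUnit_det _).1 hCB)
  calc C * shrinkColumnSpace C B T
      = C - C * B * (C * B)⁻¹ * C + C * B * (C * B)⁻¹ * (T * (C * B)⁻¹ * C) := by
        simp only [shrinkColumnSpace, Matrix.mul_add, Matrix.mul_sub, Matrix.mul_one,
          Matrix.mul_assoc]
    _ = T * (C * B)⁻¹ * C := by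
        rw [hinv, Matrix.one_mul, Matrix.one_mul, sub_self, zero_add]

theorem mul_shrinkColumnSpace_sq_mul (hCB : IsUnit (C * B)) (T : Matrix n n R) :
    C * shrinkColumnSpace C B T ^ 2 * B = T * (C * B)⁻¹ * T := by
  have hinv : C * B * (C * B)⁻¹ = 1 := mul_nonsing_inv _ ((isUnit_iff_isUnit_det _).1 hCB)
  calc C * shrinkColumnSpace C B T ^ 2 * B
      = C * shrinkColumnSpace C B T * (shrinkColumnSpace C B T * B) := by
        simp only [pow_two, Matrix.mul_assoc]
    _ = T * (C * B)⁻¹ * C * (B * (C * B)⁻¹ * T) := by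
        rw [mul_shrinkColumnSpace hCB, shrinkColumnSpace_mul hCB]
    _ = T * (C * B)⁻¹ * (C * B * (C * B)⁻¹) * T := by simp only [Matrix.mul_assoc]
    _ = T * (C * B)⁻¹ * T := by rw [hinv, Matrix.mul_one]

end ShrinkColumnSpace

section LoewnerOrder

variable {m n : Type*} [Fintype m] [Fintype n] [DecidableEq n]

theorem posSemidef_inv_sub_inv_mul_mul_inv {R : Type*} [CommRing R] [PartialOrder R] [StarRing R]
    {S H : Matrix n n R} (hS : S.IsHermitian) (hSu : IsUnit S) (hHS : (S - H).PosSemidef) :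
    (S⁻¹ - S⁻¹ * H * S⁻¹).PosSemidef := by
  have hconj : S⁻¹ * (S - H) * S⁻¹ = S⁻¹ - S⁻¹ * H * S⁻¹ := by
    rw [Matrix.mul_sub, Matrix.sub_mul, nonsing_inv_mul _ ((isUnit_iff_isUnit_det _).1 hSu),
      Matrix.one_mul]
  simpa only [hS.inv.eq, hconj] using hHS.conjTranspose_mul_mul_same S⁻¹

variable {𝕜 : Type*} [Field 𝕜] [PartialOrder 𝕜] [StarRing 𝕜] [StarOrderedRing 𝕜]

theorem posDef_conjTranspose_mul_self_iff_isUnit {B : Matrix m n 𝕜} :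
    (Bᴴ * B).PosDef ↔ IsUnit (Bᴴ * B) := by
  refine ⟨PosDef.isUnit, fun hB ↦ PosDef.conjTranspose_mul_self B ?_⟩
  have hinj : Function.Injective (Bᴴ.mulVec ∘ B.mulVec) := by
    simpa only [Function.comp_def, mulVec_mulVec] using mulVec_injective_of_isUnit hB
  exact hinj.of_comp

/-- Both sides say that the block matrix `[S, 1; 1, A⁻¹]` is positive semidefinite, as one sees by
taking the Schur complement of either diagonal block. -/
theorem posSemidef_inv_sub_inv_iff {A S : Matrix n n 𝕜} (hA : A.PosDef) (hS : S.PosDef) :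
    (A⁻¹ - S⁻¹).PosSemidef ↔ (S - A).PosSemidef := by
  let := hS.isUnit.invertible
  let := hA.inv.isUnit.invertible
  have hcomplS := PosDef.fromBlocks₁₁ (1 : Matrix n n 𝕜) A⁻¹ hS
  have hcomplA := PosDef.fromBlocks₂₂ S (1 : Matrix n n 𝕜) hA.inv
  rw [nonsing_inv_nonsing_inv A ((isUnit_iff_isUnit_det _).1 hA.isUnit)] at hcomplA
  simpa only [conjTranspose_one, Matrix.one_mul, Matrix.mul_one] using hcomplS.symm.trans hcomplA

end LoewnerOrder

theorem statement8_general {m n 𝕜 : Type*} [Fintype m] [DecidableEq m] [Fintype n] [DecidableEq n]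
    [Field 𝕜] [PartialOrder 𝕜] [StarRing 𝕜] [StarOrderedRing 𝕜]
    (B : Matrix m n 𝕜) (Ω : Matrix n n 𝕜) (hB : IsUnit (Bᴴ * B)) (hΩ : Ω.PosSemidef) :
    Bᴴ * (1 - B * (Bᴴ * B)⁻¹ * Bᴴ +
          B * (Bᴴ * B)⁻¹ * (Ω + (Bᴴ * B)⁻¹)⁻¹ * (Bᴴ * B)⁻¹ * Bᴴ) ^ 2 * B =
        (Ω + (Bᴴ * B)⁻¹)⁻¹ * (Bᴴ * B)⁻¹ * (Ω + (Bᴴ * B)⁻¹)⁻¹ ∧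
      ((Ω + (Bᴴ * B)⁻¹)⁻¹ -
        (Ω + (Bᴴ * B)⁻¹)⁻¹ * (Bᴴ * B)⁻¹ * (Ω + (Bᴴ * B)⁻¹)⁻¹).PosSemidef ∧
      (Bᴴ * B - (Ω + (Bᴴ * B)⁻¹)⁻¹).PosSemidef := by
  have hG : (Bᴴ * B).PosDef := posDef_conjTranspose_mul_self_iff_isUnit.2 hB
  have hS : (Ω + (Bᴴ * B)⁻¹).PosDef := .posSemidef_add hΩ hG.inv
  have hle : (Ω + (Bᴴ * B)⁻¹ - (Bᴴ * B)⁻¹).PosSemidef := by rwa [add_sub_cancel_right]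
  refine ⟨mul_shrinkColumnSpace_sq_mul hB _,
    posSemidef_inv_sub_inv_mul_mul_inv hS.isHermitian hS.isUnit hle, ?_⟩
  simpa only [nonsing_inv_nonsing_inv _ ((isUnit_iff_isUnit_det _).1 hB)] using
    (posSemidef_inv_sub_inv_iff hG.inv hS).2 hle

/-- Let `B` be a real `n × J` matrix with `BᵀB` invertible and `Ω` a real
symmetric positive definite `J × J` matrix. With `P_B = B(BᵀB)⁻¹Bᵀ` and
`V = B(BᵀB)⁻¹[Ω + (BᵀB)⁻¹]⁻¹(BᵀB)⁻¹Bᵀ` one has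
`Bᵀ(I_n − P_B + V)²B = [Ω + (BᵀB)⁻¹]⁻¹(BᵀB)⁻¹[Ω + (BᵀB)⁻¹]⁻¹`, and in the Loewner order
`[Ω + (BᵀB)⁻¹]⁻¹(BᵀB)⁻¹[Ω + (BᵀB)⁻¹]⁻¹ ≤ [Ω + (BᵀB)⁻¹]⁻¹ ≤ BᵀB` (i.e. the differences
are positive semidefinite). -/
theorem statement8 (n J : ℕ) (B : Matrix (Fin n) (Fin J) ℝ)
    (Ω : Matrix (Fin J) (Fin J) ℝ) (hB : IsUnit (Bᵀ * B)) (hΩ : Ω.PosDef) :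
    Bᵀ * (1 - B * (Bᵀ * B)⁻¹ * Bᵀ +
          B * (Bᵀ * B)⁻¹ * (Ω + (Bᵀ * B)⁻¹)⁻¹ * (Bᵀ * B)⁻¹ * Bᵀ) ^ 2 * B =
        (Ω + (Bᵀ * B)⁻¹)⁻¹ * (Bᵀ * B)⁻¹ * (Ω + (Bᵀ * B)⁻¹)⁻¹ ∧
      ((Ω + (Bᵀ * B)⁻¹)⁻¹ -
        (Ω + (Bᵀ * B)⁻¹)⁻¹ * (Bᵀ * B)⁻¹ * (Ω + (Bᵀ * B)⁻¹)⁻¹).PosSemidef ∧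
      (Bᵀ * B - (Ω + (Bᵀ * B)⁻¹)⁻¹).PosSemidef := by
  simpa only [conjTranspose_eq_transpose_of_trivial] using
    statement8_general B Ω hB hΩ.posSemidef
end

section
/- There is a constant C > 0, depending only on q = (q_1,…,q_d), d, the quasi-uniformity constant C₀ and K_max, such that the following holds. Suppose each direction's knot sequence is quasi-uniform with constant C₀; suppose G is a cumulative distribution function on [0,1]^d whose density is bounded above by K_max; and suppose the design points X_1,…,X_n ∈ [0,1]^d satisfy sup_{x∈[0,1]^d} |G_n(x) − G(x)| ≤ ∏_{k=1}^d N_k^{−1}, where G_n is their empirical distribution function. Then for every multi-index j = (j_1,…,j_d) with 1 ≤ j_k ≤ J_k and every p = (p_1,…,p_d) ∈ ℕ^d: Σ_{i=1}^n ∏_{k=1}^d B_{j_k,q_k}(X_{ik})^{p_k} ≤ C n ∏_{k=1}^d J_k^{−1}. -/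
/-!
The B-spline `B_{j,q}` takes values in `[0, 1]` and is supported in `[t_{j-q}, t_j]`, so the sum is
at most the number of design points in a closed box `∏ k, [a_k, b_k]`. By inclusion–exclusion over
its `2 ^ d` corners, the fraction of design points in a half-open box exceeds its `G`-measure by at
most `2 ^ d * sup |G_n - G|`; shrinking half-open boxes onto the closed one gives the same bound for
the latter, whose `G`-measure is at most `K_max * ∏ k, (b_k - a_k)`. Quasi-uniformity makes every
side length, like every `N_k⁻¹`, at most a constant times `J_k⁻¹`.
-/

open MeasureTheory

/-- A knot sequence `0 = t 0 < t 1 < ⋯ < t N < t (N+1) = 1` on `[0,1]` with `N` interior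
knots. -/
structure KnotSeq where
  N : ℕ
  t : ℕ → ℝ
  t0 : t 0 = 0
  tN : t (N + 1) = 1
  mono : ∀ l, l < N + 1 → t l < t (l + 1)

namespace KnotSeq

/-- The extended knot sequence: the boundary knots `0` and `1` are repeated. -/
noncomputable def T (ks : KnotSeq) (l : ℤ) : ℝ :=
  if l ≤ 0 then 0 else if (ks.N + 1 : ℤ) ≤ l then 1 else ks.t l.toNat

/-- The mesh size `Δ = max_{1 ≤ l ≤ N+1} (t l − t (l−1))`. -/
noncomputable def mesh (ks : KnotSeq) : ℝ :=
  (Finset.Icc 1 (ks.N + 1)).sup' (Finset.nonempty_Icc.mpr (by omega))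
    fun l => ks.t l - ks.t (l - 1)

/-- Quasi-uniformity with constant `C₀`: the mesh size is at most `C₀` times every
spacing. -/
def QuasiUniform (ks : KnotSeq) (C₀ : ℝ) : Prop :=
  ∀ l ∈ Finset.Icc 1 (ks.N + 1), ks.mesh ≤ C₀ * (ks.t l - ks.t (l - 1))

end KnotSeq

/-- The normalized B-spline `B_{j,m}` of order `m` for the extended knot sequence `T`,
defined by the Cox–de Boor recursion.  `B_{j,1}` is the indicator of `[T (j−1), T j)`,
also including the point `1` when `T j = 1 > T (j−1)`; for orders `≥ 2` the recursion is
`B_{j,m}(x) = ((x − T(j−m))/(T(j−1) − T(j−m))) B_{j−1,m−1}(x)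
  + ((T j − x)/(T j − T(j−m+1))) B_{j,m−1}(x)`,
a term with zero denominator being zero (Lean's division-by-zero convention). -/
noncomputable def Bspl (T : ℤ → ℝ) : ℕ → ℤ → ℝ → ℝ
  | 0, _, _ => 0
  | 1, j, x =>
      if T (j - 1) ≤ x ∧ (x < T j ∨ (x = 1 ∧ T j = 1 ∧ T (j - 1) < 1)) then 1 else 0
  | m + 2, j, x =>
      (x - T (j - (m + 2))) / (T (j - 1) - T (j - (m + 2))) * Bspl T (m + 1) (j - 1) x
        + (T j - x) / (T j - T (j - (m + 1))) * Bspl T (m + 1) j x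

open scoped Classical

namespace Bspl

variable {T : ℤ → ℝ}

/-- The part of `B_{i,m}` that the Cox–de Boor recursion passes on to `B_{i+1,m+1}`. -/
noncomputable def rising (T : ℤ → ℝ) (m : ℕ) (i : ℤ) (x : ℝ) : ℝ :=
  (x - T (i - m)) / (T i - T (i - m)) * Bspl T m i x

/-- The part of `B_{i,m}` that the Cox–de Boor recursion passes on to `B_{i,m+1}`. -/
noncomputable def falling (T : ℤ → ℝ) (m : ℕ) (i : ℤ) (x : ℝ) : ℝ :=
  (T i - x) / (T i - T (i - m)) * Bspl T m i x

theorem add_two_eq_rising_add_falling (T : ℤ → ℝ) (m : ℕ) (j : ℤ) (x : ℝ) :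
    Bspl T (m + 2) j x = rising T (m + 1) (j - 1) x + falling T (m + 1) j x := by
  have hidx : j - 1 - ((m + 1 : ℕ) : ℤ) = j - (m + 2) := by push_cast; ring
  rw [Bspl, rising, falling, hidx, Nat.cast_succ]

theorem mem_Icc_of_ne_zero (hT : Monotone T) :
    ∀ (m : ℕ) {j : ℤ} {x : ℝ}, Bspl T m j x ≠ 0 → x ∈ Set.Icc (T (j - m)) (T j)
  | 0, _, _, h => by simp [Bspl] at h
  | 1, j, x, h => by
    rw [Bspl, ne_eq, ite_eq_right_iff, Classical.not_imp] at h
    obtain ⟨⟨hle, hlt | ⟨rfl, hTj, -⟩⟩, -⟩ := h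
    · exact ⟨by simpa using hle, hlt.le⟩
    · exact ⟨by simpa using hle, hTj.ge⟩
  | m + 2, j, x, h => by
    have hparts : Bspl T (m + 1) (j - 1) x ≠ 0 ∨ Bspl T (m + 1) j x ≠ 0 := by
      contrapose! h
      simp [Bspl, h]
    rcases hparts with h | h <;> obtain ⟨hl, hr⟩ := mem_Icc_of_ne_zero hT (m + 1) h
    · exact ⟨(hT (by push_cast; lia)).trans hl, hr.trans (hT (by lia))⟩
    · exact ⟨(hT (by push_cast; lia)).trans hl, hr⟩

theorem rising_nonneg (hT : Monotone T) {m : ℕ} {i : ℤ} {x : ℝ} (h : 0 ≤ Bspl T m i x) :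
    0 ≤ rising T m i x := by
  by_cases hB : Bspl T m i x = 0
  · simp [rising, hB]
  · obtain ⟨hl, hr⟩ := mem_Icc_of_ne_zero hT m hB
    exact mul_nonneg (div_nonneg (by linarith) (by linarith)) h

theorem falling_nonneg (hT : Monotone T) {m : ℕ} {i : ℤ} {x : ℝ} (h : 0 ≤ Bspl T m i x) :
    0 ≤ falling T m i x := by
  by_cases hB : Bspl T m i x = 0
  · simp [falling, hB]
  · obtain ⟨hl, hr⟩ := mem_Icc_of_ne_zero hT m hB
    exact mul_nonneg (div_nonneg (by linarith) (by linarith)) h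

theorem nonneg (hT : Monotone T) : ∀ (m : ℕ) (j : ℤ) (x : ℝ), 0 ≤ Bspl T m j x
  | 0, _, _ => by simp [Bspl]
  | 1, _, _ => by rw [Bspl]; positivity
  | m + 2, j, x => by
    rw [add_two_eq_rising_add_falling]
    exact add_nonneg (rising_nonneg hT (nonneg hT _ _ _)) (falling_nonneg hT (nonneg hT _ _ _))

theorem rising_add_falling_le (hT : Monotone T) (m : ℕ) (i : ℤ) (x : ℝ) :
    rising T m i x + falling T m i x ≤ Bspl T m i x := by
  have hsum : rising T m i x + falling T m i x =
      (T i - T (i - m)) / (T i - T (i - m)) * Bspl T m i x := by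
    simp only [rising, falling]; ring
  rw [hsum]
  exact mul_le_of_le_one_left (nonneg hT m i x) (div_self_le_one _)

theorem sum_one_le_one (hT : Monotone T) (hT1 : ∀ j, T j ≤ 1) (s : Finset ℤ) (x : ℝ) :
    ∑ j ∈ s, Bspl T 1 j x ≤ 1 := by
  simp only [Bspl, Finset.sum_boole]
  refine Nat.cast_le_one.2 (Finset.card_le_one.2 fun i hi j hj => ?_)
  simp only [Finset.mem_filter] at hi hj
  by_contra hij
  wlog hlt : i < j generalizing i j
  · exact this j i hj hi (Ne.symm hij) (by lia)
  have hTij : T i ≤ T (j - 1) := hT (by lia)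
  have hTj : T j ≤ 1 := hT1 j
  obtain ⟨-, -, hxi | ⟨hx, hi1, -⟩⟩ := hi <;> obtain ⟨-, hjx, hxj | ⟨-, -, hj1⟩⟩ := hj <;>
    linarith

theorem sum_le_one (hT : Monotone T) (hT1 : ∀ j, T j ≤ 1) :
    ∀ (m : ℕ) (s : Finset ℤ) (x : ℝ), ∑ j ∈ s, Bspl T m j x ≤ 1
  | 0, _, _ => by simp [Bspl]
  | 1, s, x => sum_one_le_one hT hT1 s x
  | m + 2, s, x => by
    let s' := s.image (· - 1)
    calc ∑ j ∈ s, Bspl T (m + 2) j x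
        = ∑ i ∈ s', rising T (m + 1) i x + ∑ i ∈ s, falling T (m + 1) i x := by
          rw [Finset.sum_image (sub_left_injective.injOn), ← Finset.sum_add_distrib]
          exact Finset.sum_congr rfl fun j _ => add_two_eq_rising_add_falling T m j x
      _ ≤ ∑ i ∈ s' ∪ s, rising T (m + 1) i x + ∑ i ∈ s' ∪ s, falling T (m + 1) i x :=
          add_le_add
            (Finset.sum_le_sum_of_subset_of_nonneg Finset.subset_union_left
              fun i _ _ => rising_nonneg hT (nonneg hT _ i x))
            (Finset.sum_le_sum_of_subset_of_nonneg Finset.subset_union_right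
              fun i _ _ => falling_nonneg hT (nonneg hT _ i x))
      _ ≤ ∑ i ∈ s' ∪ s, Bspl T (m + 1) i x := by
          rw [← Finset.sum_add_distrib]
          exact Finset.sum_le_sum fun i _ => rising_add_falling_le hT (m + 1) i x
      _ ≤ 1 := sum_le_one hT hT1 (m + 1) _ x

theorem le_one (hT : Monotone T) (hT1 : ∀ j, T j ≤ 1) (m : ℕ) (j : ℤ) (x : ℝ) :
    Bspl T m j x ≤ 1 := by
  simpa using sum_le_one hT hT1 m {j} x

theorem prod_pow_le_indicator {ι : Type*} [Fintype ι] {T : ι → ℤ → ℝ} (hT : ∀ k, Monotone (T k))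
    (hT1 : ∀ k j, T k j ≤ 1) (m : ι → ℕ) (j : ι → ℤ) {p : ι → ℕ} (hp : ∀ k, p k ≠ 0)
    (x : ι → ℝ) :
    ∏ k, Bspl (T k) (m k) (j k) (x k) ^ p k ≤
      (Set.Icc (fun k => T k (j k - m k)) (fun k => T k (j k))).indicator 1 x := by
  have hnonneg k := nonneg (hT k) (m k) (j k) (x k)
  by_cases hx : x ∈ Set.Icc (fun k => T k (j k - m k)) (fun k => T k (j k))
  · rw [Set.indicator_of_mem hx, Pi.one_apply]
    exact Finset.prod_le_one (fun k _ => pow_nonneg (hnonneg k) _)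
      fun k _ => pow_le_one₀ (hnonneg k) (le_one (hT k) (hT1 k) _ _ _)
  · rw [Set.indicator_of_notMem hx]
    obtain ⟨k, hk⟩ : ∃ k, Bspl (T k) (m k) (j k) (x k) = 0 := by
      by_contra! hne
      exact hx ⟨fun k => (mem_Icc_of_ne_zero (hT k) _ (hne k)).1,
        fun k => (mem_Icc_of_ne_zero (hT k) _ (hne k)).2⟩
    exact (Finset.prod_eq_zero (Finset.mem_univ k) (by rw [hk, zero_pow (hp k)])).le

end Bspl

namespace KnotSeq

variable (ks : KnotSeq)

theorem T_eq_t_min (l : ℤ) : ks.T l = ks.t (min l.toNat (ks.N + 1)) := by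
  unfold T
  split_ifs with h0 h1
  · rw [Int.toNat_of_nonpos h0, Nat.zero_min, ks.t0]
  · rw [min_eq_right (by lia), ks.tN]
  · rw [min_eq_left (by lia)]

variable {ks} in
theorem t_succ_sub_le_mesh {l : ℕ} (hl : l < ks.N + 1) : ks.t (l + 1) - ks.t l ≤ ks.mesh :=
  Finset.le_sup' (fun l => ks.t l - ks.t (l - 1)) (Finset.mem_Icc.2 ⟨l.succ_pos, hl⟩)

theorem mesh_nonneg : 0 ≤ ks.mesh :=
  (sub_nonneg.2 (ks.mono 0 ks.N.succ_pos).le).trans (t_succ_sub_le_mesh ks.N.succ_pos)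

theorem T_succ_sub_mem_Icc (l : ℤ) : ks.T (l + 1) - ks.T l ∈ Set.Icc 0 ks.mesh := by
  rw [T_eq_t_min, T_eq_t_min]
  by_cases h : 0 ≤ l ∧ l < ks.N + 1
  · rw [show min l.toNat (ks.N + 1) = l.toNat by lia,
      show min (l + 1).toNat (ks.N + 1) = l.toNat + 1 by lia]
    exact ⟨sub_nonneg.2 (ks.mono _ (by lia)).le, t_succ_sub_le_mesh (by lia)⟩
  · rw [show min (l + 1).toNat (ks.N + 1) = min l.toNat (ks.N + 1) by lia, sub_self]
    exact ⟨le_rfl, ks.mesh_nonneg⟩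

theorem monotone_T : Monotone ks.T :=
  monotone_int_of_le_succ fun l => sub_nonneg.1 (ks.T_succ_sub_mem_Icc l).1

theorem T_le_one (l : ℤ) : ks.T l ≤ 1 := by
  have hT : ks.T (max l (ks.N + 1)) = 1 := by
    rw [T, if_neg (by lia), if_pos (by lia)]
  exact hT ▸ ks.monotone_T (le_max_left l (ks.N + 1))

theorem T_sub_T_sub_le (l : ℤ) (m : ℕ) : ks.T l - ks.T (l - m) ≤ m * ks.mesh := by
  induction m with
  | zero => simp
  | succ m ih =>
    have hstep := (ks.T_succ_sub_mem_Icc (l - (m + 1))).2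
    rw [show l - ((m : ℤ) + 1) + 1 = l - m by ring] at hstep
    push_cast
    linarith

namespace QuasiUniform

variable {ks} {C₀ : ℝ}

theorem succ_N_mul_mesh_le (h : ks.QuasiUniform C₀) : ((ks.N : ℝ) + 1) * ks.mesh ≤ C₀ :=
  calc ((ks.N : ℝ) + 1) * ks.mesh = ∑ _l ∈ Finset.range (ks.N + 1), ks.mesh := by simp
    _ ≤ ∑ l ∈ Finset.range (ks.N + 1), C₀ * (ks.t (l + 1) - ks.t l) :=
        Finset.sum_le_sum fun l hl =>
          h (l + 1) (Finset.mem_Icc.2 ⟨l.succ_pos, Finset.mem_range.1 hl⟩)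
    _ = C₀ := by rw [← Finset.mul_sum, Finset.sum_range_sub, ks.tN, ks.t0, sub_zero, mul_one]

theorem T_sub_T_sub_le (h : ks.QuasiUniform C₀) {q : ℕ} (hq : 1 ≤ q) (l : ℤ) :
    ks.T l - ks.T (l - q) ≤ (q : ℝ) ^ 2 * C₀ * ((ks.N + q : ℕ) : ℝ)⁻¹ := by
  have hJ : (0 : ℝ) < (ks.N + q : ℕ) := by positivity
  have hJ_le : ((ks.N + q : ℕ) : ℝ) ≤ q * (ks.N + 1) := by
    exact_mod_cast (by nlinarith : ks.N + q ≤ q * (ks.N + 1))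
  rw [← div_eq_mul_inv, le_div_iff₀ hJ]
  calc (ks.T l - ks.T (l - q)) * (ks.N + q : ℕ)
      ≤ q * ks.mesh * (q * (ks.N + 1)) :=
        mul_le_mul (ks.T_sub_T_sub_le l q) hJ_le hJ.le
          (mul_nonneg q.cast_nonneg ks.mesh_nonneg)
    _ = (q : ℝ) ^ 2 * ((ks.N + 1) * ks.mesh) := by ring
    _ ≤ (q : ℝ) ^ 2 * C₀ := by gcongr; exact h.succ_N_mul_mesh_le

end QuasiUniform

end KnotSeq

-- For `N = 0` the left-hand side is the junk value `0⁻¹ = 0`.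
theorem inv_natCast_le_succ_mul_inv_add (N q : ℕ) :
    (N : ℝ)⁻¹ ≤ ((q : ℝ) + 1) * ((N + q : ℕ) : ℝ)⁻¹ := by
  rcases N.eq_zero_or_pos with rfl | hN
  · rw [Nat.cast_zero, inv_zero]
    positivity
  · have hle : ((N + q : ℕ) : ℝ) ≤ (q + 1) * N := by
      exact_mod_cast (by nlinarith : N + q ≤ (q + 1) * N)
    rw [← div_eq_mul_inv, inv_eq_one_div, div_le_div_iff₀ (by positivity) (by positivity), one_mul]
    exact hle

section InclusionExclusion

variable {ι : Type*} [Fintype ι]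

theorem indicator_pi_Ioc_eq_sum {α : ι → Type*} [∀ k, LinearOrder (α k)] {R : Type*} [CommRing R]
    {a b : ∀ k, α k} (hab : a ≤ b) (f : (∀ k, α k) → R) (y : ∀ k, α k) :
    (Set.univ.pi fun k => Set.Ioc (a k) (b k)).indicator f y =
      ∑ s : Finset ι, (-1) ^ s.card * (Set.Iic (s.piecewise a b)).indicator f y := by
  have hmul (S : Set (∀ k, α k)) : S.indicator f y = S.indicator 1 y * f y := by
    simp [Set.indicator_apply]
  have hfactor (k) : (Set.Ioc (a k) (b k)).indicator (1 : α k → R) (y k) =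
      (Set.Iic (b k)).indicator 1 (y k) - (Set.Iic (a k)).indicator 1 (y k) := by
    rw [← Set.Iic_sdiff_Iic, Set.indicator_sdiff (Set.Iic_subset_Iic.2 (hab k)), Pi.sub_apply]
  have hcorner (s : Finset ι) : (Set.Iic (s.piecewise a b)).indicator (1 : (∀ k, α k) → R) y =
      (∏ k ∈ Finset.univ \ s, (Set.Iic (b k)).indicator 1 (y k)) *
        ∏ k ∈ s, (Set.Iic (a k)).indicator 1 (y k) := by
    rw [← Set.pi_univ_Iic, ← Finset.coe_univ, Set.indicator_pi_one_apply,
      ← Finset.prod_sdiff (Finset.subset_univ s)]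
    congr 1 <;> refine Finset.prod_congr rfl fun k hk => ?_
    · rw [Finset.piecewise_eq_of_notMem _ _ _ (Finset.mem_sdiff.1 hk).2]
    · rw [Finset.piecewise_eq_of_mem _ _ _ hk]
  simp_rw [hmul, hcorner, ← mul_assoc, ← Finset.sum_mul]
  rw [← Finset.coe_univ, Set.indicator_pi_one_apply, Finset.prod_congr rfl fun k _ => hfactor k,
    Finset.prod_sub, Finset.powerset_univ]

theorem setIntegral_pi_Ioc_eq_sum {μ : Measure (ι → ℝ)} {f : (ι → ℝ) → ℝ} (hf : Integrable f μ)
    {a b : ι → ℝ} (hab : a ≤ b) :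
    ∫ y in Set.univ.pi fun k => Set.Ioc (a k) (b k), f y ∂μ =
      ∑ s : Finset ι, (-1) ^ s.card * ∫ y in Set.Iic (s.piecewise a b), f y ∂μ := by
  rw [← integral_indicator (MeasurableSet.univ_pi fun _ => measurableSet_Ioc)]
  simp_rw [indicator_pi_Ioc_eq_sum hab]
  rw [integral_finsetSum _ fun s _ => (hf.indicator measurableSet_Iic).const_mul _]
  simp_rw [integral_const_mul, integral_indicator measurableSet_Iic]

end InclusionExclusion

theorem setIntegral_le_mul_measureReal {α : Type*} [MeasurableSpace α] {μ : Measure α} {s t : Set α}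
    {f : α → ℝ} {K : ℝ} (hs : MeasurableSet s) (ht : MeasurableSet t) (hμt : μ t ≠ ⊤)
    (hf : IntegrableOn f s μ) (hK : 0 ≤ K) (hfK : ∀ y ∈ s, f y ≤ K) :
    ∫ y in t, f y ∂μ.restrict s ≤ K * μ.real t := by
  rw [Measure.restrict_restrict ht]
  calc ∫ y in t ∩ s, f y ∂μ ≤ ∫ _ in t ∩ s, K ∂μ :=
        setIntegral_mono_on (hf.mono_set Set.inter_subset_right)
          (integrableOn_const (measure_ne_top_of_subset Set.inter_subset_left hμt))
          (ht.inter hs) fun y hy => hfK y hy.2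
    _ = K * μ.real (t ∩ s) := by rw [setIntegral_const, smul_eq_mul, mul_comm]
    _ ≤ K * μ.real t := by gcongr; exact Set.inter_subset_left

section Discrepancy

/-- The fraction of the points `X_1, …, X_n` that lie in `S`; for `S = Set.Iic x` this is the
empirical distribution function `G_n x`. It is `0` for `n = 0`. -/
noncomputable def empiricalFreq {α : Type*} {n : ℕ} (X : Fin n → α) (S : Set α) : ℝ :=
  (n : ℝ)⁻¹ * ∑ i, S.indicator 1 (X i)

theorem empiricalFreq_mono {α : Type*} {n : ℕ} (X : Fin n → α) : Monotone (empiricalFreq X) :=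
  fun _ _ hST => mul_le_mul_of_nonneg_left
    (Finset.sum_le_sum fun _ _ => Set.indicator_le_indicator_of_subset hST (fun _ => zero_le_one) _)
    (by positivity)

theorem sum_indicator_one_eq_mul_empiricalFreq {α : Type*} {n : ℕ} (X : Fin n → α) (S : Set α) :
    ∑ i, S.indicator 1 (X i) = n * empiricalFreq X S := by
  rcases n.eq_zero_or_pos with rfl | hn
  · simp
  · rw [empiricalFreq, mul_inv_cancel_left₀ (by positivity)]

theorem empiricalFreq_Iic {ι : Type*} {n : ℕ} (X : Fin n → ι → ℝ) (x : ι → ℝ)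
    [∀ i, Decidable (∀ k, X i k ≤ x k)] :
    empiricalFreq X (Set.Iic x) = (n : ℝ)⁻¹ * ∑ i, if ∀ k, X i k ≤ x k then (1 : ℝ) else 0 := by
  simp only [empiricalFreq, Set.indicator_apply, Set.mem_Iic, Pi.le_def, Pi.one_apply]

variable {ι : Type*} [Fintype ι] {n : ℕ} {X : Fin n → ι → ℝ} {g : (ι → ℝ) → ℝ} {a b : ι → ℝ}
  {ε K : ℝ}

theorem empiricalFreq_pi_Ioc_eq_sum (X : Fin n → ι → ℝ) (hab : a ≤ b) :
    empiricalFreq X (Set.univ.pi fun k => Set.Ioc (a k) (b k)) =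
      ∑ s : Finset ι, (-1) ^ s.card * empiricalFreq X (Set.Iic (s.piecewise a b)) := by
  simp_rw [empiricalFreq, indicator_pi_Ioc_eq_sum hab, mul_left_comm _ (n : ℝ)⁻¹, ← Finset.mul_sum]
  rw [Finset.sum_comm]
  simp_rw [Finset.mul_sum]

theorem abs_empiricalFreq_pi_Ioc_sub_le {μ : Measure (ι → ℝ)} (hg : Integrable g μ)
    (hab : a ≤ b)
    (hε : ∀ x ≤ b, |empiricalFreq X (Set.Iic x) - ∫ y in Set.Iic x, g y ∂μ| ≤ ε) :
    |empiricalFreq X (Set.univ.pi fun k => Set.Ioc (a k) (b k)) -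
      ∫ y in Set.univ.pi fun k => Set.Ioc (a k) (b k), g y ∂μ| ≤ 2 ^ Fintype.card ι * ε := by
  rw [empiricalFreq_pi_Ioc_eq_sum X hab, setIntegral_pi_Ioc_eq_sum hg hab,
    ← Finset.sum_sub_distrib]
  simp_rw [← mul_sub]
  calc _ ≤ ∑ s : Finset ι, |(-1) ^ s.card * (empiricalFreq X (Set.Iic (s.piecewise a b)) -
          ∫ y in Set.Iic (s.piecewise a b), g y ∂μ)| := Finset.abs_sum_le_sum_abs _ _
    _ ≤ ∑ _s : Finset ι, ε := Finset.sum_le_sum fun s _ => by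
        rw [abs_mul, abs_neg_one_pow, one_mul]
        exact hε _ (s.piecewise_le_of_le_of_le hab le_rfl)
    _ = 2 ^ Fintype.card ι * ε := by simp

-- A corner `x` with a negative coordinate is not covered by `hε`, but there both terms vanish.
theorem abs_empiricalFreq_Iic_sub_le_of_le_one (hX : ∀ i, X i ∈ Set.Icc 0 1)
    (hε : ∀ x ∈ Set.Icc 0 1, |empiricalFreq X (Set.Iic x) - ∫ y in Set.Icc 0 x, g y| ≤ ε)
    {x : ι → ℝ} (hx : x ≤ 1) :
    |empiricalFreq X (Set.Iic x) - ∫ y in Set.Iic x, g y ∂volume.restrict (Set.Icc 0 1)| ≤ ε := by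
  have hinter : Set.Iic x ∩ Set.Icc 0 1 = Set.Icc 0 x :=
    Set.ext fun y => ⟨fun h => ⟨h.2.1, h.1⟩, fun h => ⟨h.2, h.1, h.2.trans hx⟩⟩
  rw [Measure.restrict_restrict measurableSet_Iic, hinter]
  by_cases hx0 : 0 ≤ x
  · exact hε x ⟨hx0, hx⟩
  · have hfreq : empiricalFreq X (Set.Iic x) = 0 := by
      have hnotMem (i) : X i ∉ Set.Iic x := fun hi => hx0 ((hX i).1.trans hi)
      simp [empiricalFreq, hnotMem]
    rw [hfreq, Set.Icc_eq_empty hx0, setIntegral_empty, sub_zero, abs_zero]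
    exact (abs_nonneg _).trans (hε 0 ⟨le_rfl, zero_le_one⟩)

theorem empiricalFreq_pi_Ioc_le (hX : ∀ i, X i ∈ Set.Icc 0 1)
    (hg : IntegrableOn g (Set.Icc 0 1)) (hK : 0 ≤ K) (hgK : ∀ y ∈ Set.Icc 0 1, g y ≤ K)
    (hε : ∀ x ∈ Set.Icc 0 1, |empiricalFreq X (Set.Iic x) - ∫ y in Set.Icc 0 x, g y| ≤ ε)
    (hab : a ≤ b) (hb : b ≤ 1) :
    empiricalFreq X (Set.univ.pi fun k => Set.Ioc (a k) (b k)) ≤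
      K * ∏ k, (b k - a k) + 2 ^ Fintype.card ι * ε := by
  let box := Set.univ.pi fun k => Set.Ioc (a k) (b k)
  have hvol : volume.real box = ∏ k, (b k - a k) := Real.volume_pi_Ioc_toReal hab
  have hmass : ∫ y in box, g y ∂volume.restrict (Set.Icc 0 1) ≤ K * volume.real box :=
    setIntegral_le_mul_measureReal measurableSet_Icc
      (MeasurableSet.univ_pi fun _ => measurableSet_Ioc)
      (by rw [Real.volume_pi_Ioc]; exact ENNReal.prod_ne_top fun _ _ => ENNReal.ofReal_ne_top)
      hg hK hgK
  have hdiscrepancy := (abs_le.1 <| abs_empiricalFreq_pi_Ioc_sub_le hg hab fun x hx =>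
    abs_empiricalFreq_Iic_sub_le_of_le_one hX hε (hx.trans hb)).2
  rw [hvol] at hmass
  linarith

theorem empiricalFreq_Icc_le (hX : ∀ i, X i ∈ Set.Icc 0 1)
    (hg : IntegrableOn g (Set.Icc 0 1)) (hK : 0 ≤ K) (hgK : ∀ y ∈ Set.Icc 0 1, g y ≤ K)
    (hε : ∀ x ∈ Set.Icc 0 1, |empiricalFreq X (Set.Iic x) - ∫ y in Set.Icc 0 x, g y| ≤ ε)
    (hab : a ≤ b) (hb : b ≤ 1) :
    empiricalFreq X (Set.Icc a b) ≤ K * ∏ k, (b k - a k) + 2 ^ Fintype.card ι * ε := by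
  have hcont : Continuous fun η : ℝ => K * ∏ k, (b k - (a k - η)) + 2 ^ Fintype.card ι * ε := by
    fun_prop
  have hlim := (hcont.tendsto 0).mono_left (nhdsWithin_le_nhds (s := Set.Ioi 0))
  simp only [sub_zero] at hlim
  refine ge_of_tendsto hlim (eventually_mem_nhdsWithin.mono fun η (hη : 0 < η) => ?_)
  have hsubset : Set.Icc a b ⊆ Set.univ.pi fun k => Set.Ioc (a k - η) (b k) :=
    fun y hy k _ => ⟨(sub_lt_self _ hη).trans_le (hy.1 k), hy.2 k⟩
  exact (empiricalFreq_mono X hsubset).trans <| empiricalFreq_pi_Ioc_le hX hg hK hgK hε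
    (fun k => (sub_le_self _ hη.le).trans (hab k)) hb

end Discrepancy

theorem statement11_general {ι : Type*} [Fintype ι] {q : ι → ℕ} (hq : ∀ k, 1 ≤ q k) {C₀ K : ℝ}
    (hK : 0 ≤ K) {ks : ι → KnotSeq} (hks : ∀ k, (ks k).QuasiUniform C₀) {n : ℕ}
    {X : Fin n → ι → ℝ} (hX : ∀ i, X i ∈ Set.Icc 0 1) {g : (ι → ℝ) → ℝ}
    (hg : IntegrableOn g (Set.Icc 0 1)) (hgK : ∀ y ∈ Set.Icc 0 1, g y ≤ K)
    (hG : ∀ x ∈ Set.Icc 0 1, |empiricalFreq X (Set.Iic x) - ∫ y in Set.Icc 0 x, g y| ≤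
      ∏ k, ((ks k).N : ℝ)⁻¹)
    (j : ι → ℤ) {p : ι → ℕ} (hp : ∀ k, p k ≠ 0) :
    ∑ i, ∏ k, Bspl (ks k).T (q k) (j k) (X i k) ^ p k ≤
      (K * ∏ k, ((q k : ℝ) ^ 2 * C₀) + 2 ^ Fintype.card ι * ∏ k, ((q k : ℝ) + 1)) * n *
        ∏ k, (((ks k).N + q k : ℕ) : ℝ)⁻¹ := by
  let a : ι → ℝ := fun k => (ks k).T (j k - q k)
  let b : ι → ℝ := fun k => (ks k).T (j k)
  have hab : a ≤ b := fun k => (ks k).monotone_T (by lia)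
  calc ∑ i, ∏ k, Bspl (ks k).T (q k) (j k) (X i k) ^ p k
      ≤ ∑ i, (Set.Icc a b).indicator 1 (X i) := Finset.sum_le_sum fun i _ =>
        Bspl.prod_pow_le_indicator (fun k => (ks k).monotone_T) (fun k => (ks k).T_le_one) q j hp _
    _ = n * empiricalFreq X (Set.Icc a b) := sum_indicator_one_eq_mul_empiricalFreq X _
    _ ≤ n * (K * ∏ k, (b k - a k) + 2 ^ Fintype.card ι * ∏ k, ((ks k).N : ℝ)⁻¹) := by
        gcongr
        exact empiricalFreq_Icc_le hX hg hK hgK hG hab fun k => (ks k).T_le_one _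
    _ ≤ n * (K * ∏ k, ((q k : ℝ) ^ 2 * C₀ * (((ks k).N + q k : ℕ) : ℝ)⁻¹) +
          2 ^ Fintype.card ι * ∏ k, (((q k : ℝ) + 1) * (((ks k).N + q k : ℕ) : ℝ)⁻¹)) := by
        gcongr with k _ k _
        · exact fun k _ => sub_nonneg.2 (hab k)
        · exact (hks k).T_sub_T_sub_le (hq k) _
        · exact inv_natCast_le_succ_mul_inv_add _ _
    _ = _ := by simp only [Finset.prod_mul_distrib]; ring

/-- There is a constant `C > 0` depending only on `q`, `d`, the
quasi-uniformity constant `C₀` and `K_max` such that: for quasi-uniform knot sequences,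
a distribution function `G` on `[0,1]^d` with density `g ≤ K_max`, and design points
whose empirical distribution `G_n` satisfies `sup_x |G_n(x) − G(x)| ≤ Π_k N_k⁻¹`, one has
`Σ_i Π_k B_{j_k,q_k}(X_{ik})^{p_k} ≤ C n Π_k J_k⁻¹` for every multi-index `j` and
`p ∈ ℕ^d`. -/
theorem statement11 (d : ℕ) (hd : 1 ≤ d) (q : Fin d → ℕ) (hq : ∀ k, 1 ≤ q k)
    (C₀ Kmax : ℝ) (hC₀ : 1 ≤ C₀) (hK : 0 < Kmax) :
    ∃ C > (0 : ℝ), ∀ (ks : Fin d → KnotSeq), (∀ k, (ks k).QuasiUniform C₀) →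
      ∀ (n : ℕ) (X : Fin n → Fin d → ℝ), (∀ i k, X i k ∈ Set.Icc (0 : ℝ) 1) →
      ∀ g : (Fin d → ℝ) → ℝ, Measurable g →
        (∀ y ∈ Set.univ.pi fun _ : Fin d => Set.Icc (0 : ℝ) 1, 0 ≤ g y) →
        (∀ y ∈ Set.univ.pi fun _ : Fin d => Set.Icc (0 : ℝ) 1, g y ≤ Kmax) →
        (∫ y in Set.univ.pi fun _ : Fin d => Set.Icc (0 : ℝ) 1, g y) = 1 →
        (∀ x ∈ Set.univ.pi fun _ : Fin d => Set.Icc (0 : ℝ) 1,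
          |(n : ℝ)⁻¹ * (∑ i, if ∀ k, X i k ≤ x k then (1 : ℝ) else 0) -
              ∫ y in Set.univ.pi fun k => Set.Icc 0 (x k), g y| ≤
            ∏ k, ((ks k).N : ℝ)⁻¹) →
        ∀ (j : (k : Fin d) → Fin ((ks k).N + q k)) (p : Fin d → ℕ), (∀ k, 1 ≤ p k) →
          ∑ i, ∏ k, Bspl (ks k).T (q k) (((j k : ℕ) : ℤ) + 1) (X i k) ^ p k ≤
            C * n * ∏ k, (((ks k).N + q k : ℕ) : ℝ)⁻¹ := by
  have : 0 ≤ C₀ := by linarith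
  refine ⟨Kmax * ∏ k, ((q k : ℝ) ^ 2 * C₀) + 2 ^ Fintype.card (Fin d) * ∏ k, ((q k : ℝ) + 1),
    by positivity, fun ks hks n X hX g hg hg0 hgK _ hG j p hp => ?_⟩
  simp only [Set.pi_univ_Icc, ← empiricalFreq_Iic X] at hg0 hgK hG
  have hgint : IntegrableOn g (Set.Icc 0 1) :=
    Measure.integrableOn_of_bounded isCompact_Icc.measure_ne_top hg.aestronglyMeasurable
      (ae_restrict_of_forall_mem measurableSet_Icc fun y hy =>
        (Real.norm_of_nonneg (hg0 y hy)).trans_le (hgK y hy))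
  exact statement11_general hq hK.le hks (fun i => ⟨fun k => (hX i k).1, fun k => (hX i k).2⟩)
    hgint hgK hG _ fun k => Nat.one_le_iff_ne_zero.1 (hp k)
end

section
/- Fix orders m = (m_1,…,m_d) with m_k ≥ 2 and, in each direction k, a knot sequence with N_k interior knots that is quasi-uniform with constant C₀, giving J_k' = N_k + m_k B-splines B_{j_k,m_k} of order m_k. There is a constant C > 0 depending only on m, d and C₀ such that for all x, y ∈ [0,1]^d: Σ_j |∏_{k=1}^d B_{j_k,m_k}(x_k) − ∏_{k=1}^d B_{j_k,m_k}(y_k)|² ≤ C (Σ_{k=1}^d J_k'²) ‖x − y‖², where the sum over j runs over all multi-indices 1 ≤ j_k ≤ J_k' and ‖·‖ is the Euclidean norm on ℝ^d. -/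
/-! In one direction write `B_{j,m} = C_{j-1,m} - C_{j,m}`, where `C_{j,m}` is the tail sum of the
`B_{i,m}` with `i > j`. The Cox–de Boor recursion says that `C_{j,m+1}` is the convex combination
`ρ C_{j-1,m} + (1 - ρ) C_{j,m}` with `ρ` the ramp rising from `T (j - m)` to `T j`. Hence all
tails lie in `[0, 1]`, so `|B_{j,m}| ≤ 1`, and each step adds at most the slope `1/δ` of the ramp to
the Lipschitz constant, so that `B_{j,m}` is `2(m-1)/δ`-Lipschitz when distinct knots are at
distance at least `δ`. Quasi-uniformity allows `δ = 1/(C₀(N+1))`. In the tensor product at most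
`2 ∏ m_k` of the summands are nonzero, each is bounded by telescoping the product over the
directions, and Cauchy–Schwarz finishes the proof.
-/

open MeasureTheory

section TensorProduct

theorem norm_prod_sub_prod_le_sum_norm_sub {ι R : Type*} [NormedCommRing R] [NormOneClass R]
    (s : Finset ι) {f g : ι → R} (hf : ∀ k ∈ s, ‖f k‖ ≤ 1) (hg : ∀ k ∈ s, ‖g k‖ ≤ 1) :
    ‖∏ k ∈ s, f k - ∏ k ∈ s, g k‖ ≤ ∑ k ∈ s, ‖f k - g k‖ := by
  classical
  induction s using Finset.induction_on with
  | empty => simp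
  | insert i s hi ih =>
    simp only [Finset.forall_mem_insert] at hf hg
    have hprod : ‖∏ k ∈ s, f k‖ ≤ 1 :=
      (Finset.norm_prod_le s f).trans (Finset.prod_le_one (fun _ _ => norm_nonneg _) hf.2)
    rw [Finset.prod_insert hi, Finset.prod_insert hi, Finset.sum_insert hi]
    calc ‖f i * ∏ k ∈ s, f k - g i * ∏ k ∈ s, g k‖
        = ‖(f i - g i) * ∏ k ∈ s, f k + g i * (∏ k ∈ s, f k - ∏ k ∈ s, g k)‖ := by
          congr 1; ring
      _ ≤ ‖f i - g i‖ * ‖∏ k ∈ s, f k‖ + ‖g i‖ * ‖∏ k ∈ s, f k - ∏ k ∈ s, g k‖ :=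
          (norm_add_le _ _).trans (add_le_add (norm_mul_le _ _) (norm_mul_le _ _))
      _ ≤ ‖f i - g i‖ + ∑ k ∈ s, ‖f k - g k‖ :=
          add_le_add (mul_le_of_le_one_right (norm_nonneg _) hprod)
            ((mul_le_of_le_one_left (norm_nonneg _) hg.1).trans (ih hf.2 hg.2))

variable {ι : Type*} [Fintype ι] [DecidableEq ι] {κ : ι → Type*} [∀ k, Fintype (κ k)]

theorem card_filter_prod_ne_zero_le {R : Type*} [CommMonoidWithZero R] [DecidableEq R]
    (f : ∀ k, κ k → R) {m : ι → ℕ}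
    (hf : ∀ k, (Finset.univ.filter fun i => f k i ≠ 0).card ≤ m k) :
    (Finset.univ.filter fun j : ∀ k, κ k => ∏ k, f k (j k) ≠ 0).card ≤ ∏ k, m k := by
  have hsub : (Finset.univ.filter fun j : ∀ k, κ k => ∏ k, f k (j k) ≠ 0) ⊆
      Fintype.piFinset fun k => Finset.univ.filter fun i => f k i ≠ 0 := by
    intro j hj
    simp only [Finset.mem_filter_univ, Fintype.mem_piFinset] at hj ⊢
    exact fun k hk => hj (Finset.prod_eq_zero (Finset.mem_univ k) hk)
  calc _ ≤ _ := Finset.card_le_card hsub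
    _ = ∏ k, (Finset.univ.filter fun i => f k i ≠ 0).card := Fintype.card_piFinset _
    _ ≤ ∏ k, m k := Finset.prod_le_prod' fun k _ => hf k

theorem sum_sq_prod_sub_prod_le (f g : ∀ k, κ k → ℝ) (m : ι → ℕ) (L : ι → ℝ)
    (hf : ∀ k i, |f k i| ≤ 1) (hg : ∀ k i, |g k i| ≤ 1)
    (hfm : ∀ k, (Finset.univ.filter fun i => f k i ≠ 0).card ≤ m k)
    (hgm : ∀ k, (Finset.univ.filter fun i => g k i ≠ 0).card ≤ m k)
    (hL : ∀ k i, |f k i - g k i| ≤ L k) :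
    ∑ j : ∀ k, κ k, (∏ k, f k (j k) - ∏ k, g k (j k)) ^ 2 ≤
      2 * (∏ k, (m k : ℝ)) * (∑ k, L k) ^ 2 := by
  classical
  set F := Finset.univ.filter fun j : ∀ k, κ k => ∏ k, f k (j k) ≠ 0 with hF
  set G := Finset.univ.filter fun j : ∀ k, κ k => ∏ k, g k (j k) ≠ 0 with hG
  have hcard : ((F ∪ G).card : ℝ) ≤ 2 * ∏ k, (m k : ℝ) := by
    have := Finset.card_union_le F G
    have : F.card ≤ ∏ k, m k := card_filter_prod_ne_zero_le f hfm
    have : G.card ≤ ∏ k, m k := card_filter_prod_ne_zero_le g hgm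
    have h : (F ∪ G).card ≤ 2 * ∏ k, m k := by omega
    exact_mod_cast h
  have hterm : ∀ j : ∀ k, κ k,
      (∏ k, f k (j k) - ∏ k, g k (j k)) ^ 2 ≤ (∑ k, L k) ^ 2 := fun j =>
    sq_le_sq.2 <| calc |∏ k, f k (j k) - ∏ k, g k (j k)|
      _ ≤ ∑ k, |f k (j k) - g k (j k)| :=
        norm_prod_sub_prod_le_sum_norm_sub (R := ℝ) _ (fun k _ => hf k (j k))
          fun k _ => hg k (j k)
      _ ≤ ∑ k, L k := Finset.sum_le_sum fun k _ => hL k (j k)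
      _ ≤ |∑ k, L k| := le_abs_self _
  calc ∑ j : ∀ k, κ k, (∏ k, f k (j k) - ∏ k, g k (j k)) ^ 2
      = ∑ j ∈ F ∪ G, (∏ k, f k (j k) - ∏ k, g k (j k)) ^ 2 := by
        refine (Finset.sum_subset (Finset.subset_univ _) fun j _ hj => ?_).symm
        simp only [hF, hG, Finset.mem_union, Finset.mem_filter_univ, not_or, not_not] at hj
        rw [hj.1, hj.2, sub_self, zero_pow two_ne_zero]
    _ ≤ (F ∪ G).card • (∑ k, L k) ^ 2 := Finset.sum_le_card_nsmul _ _ _ fun j _ => hterm j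
    _ ≤ 2 * (∏ k, (m k : ℝ)) * (∑ k, L k) ^ 2 := by
        rw [nsmul_eq_mul]
        exact mul_le_mul_of_nonneg_right hcard (sq_nonneg _)

end TensorProduct

/-- The continuous function equal to `0` up to `a`, to `1` from `b` on, and affine on `[a, b]`. For
`a = b` the convention `x / 0 = 0` makes it identically `0`. -/
noncomputable def ramp (a b x : ℝ) : ℝ :=
  max 0 (min 1 ((x - a) / (b - a)))

theorem ramp_mem_Icc (a b x : ℝ) : ramp a b x ∈ Set.Icc (0 : ℝ) 1 :=
  ⟨le_max_left _ _, max_le zero_le_one (min_le_left _ _)⟩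

theorem ramp_of_mem_Icc {a b x : ℝ} (hx : x ∈ Set.Icc a b) : ramp a b x = (x - a) / (b - a) := by
  have h0 : 0 ≤ (x - a) / (b - a) := div_nonneg (by linarith [hx.1]) (by linarith [hx.1, hx.2])
  have h1 : (x - a) / (b - a) ≤ 1 :=
    div_le_one_of_le₀ (by linarith [hx.2]) (by linarith [hx.1, hx.2])
  rw [ramp, min_eq_right h1, max_eq_right h0]

theorem ramp_of_le {a b x : ℝ} (hab : a ≤ b) (hx : x ≤ a) : ramp a b x = 0 :=
  max_eq_left ((min_le_right _ _).trans
    (div_nonpos_of_nonpos_of_nonneg (by linarith) (by linarith)))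

theorem ramp_of_ge {a b x : ℝ} (hab : a < b) (hx : b ≤ x) : ramp a b x = 1 := by
  have h : 1 ≤ (x - a) / (b - a) := (one_le_div (by linarith)).2 (by linarith)
  rw [ramp, min_eq_left h, max_eq_right zero_le_one]

theorem abs_ramp_sub_ramp_le {a b δ : ℝ} (hδ : 0 < δ) (hab : a = b ∨ a + δ ≤ b) (x y : ℝ) :
    |ramp a b x - ramp a b y| ≤ |x - y| / δ := by
  have hnonneg : 0 ≤ |x - y| / δ := by positivity
  obtain rfl | hab := hab
  · simpa [ramp] using hnonneg
  calc |ramp a b x - ramp a b y|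
      ≤ |(x - a) / (b - a) - (y - a) / (b - a)| := by
        simp only [ramp, max_comm (0 : ℝ), min_comm (1 : ℝ)]
        refine (abs_max_sub_max_le_abs _ _ _).trans ((abs_min_sub_min_le_max _ _ _ _).trans ?_)
        simp
    _ = |x - y| / (b - a) := by
        rw [← sub_div, sub_sub_sub_cancel_right, abs_div, abs_of_pos (by linarith : 0 < b - a)]
    _ ≤ |x - y| / δ := by
        gcongr
        linarith

theorem abs_convexComb_sub_convexComb_le {r s a b a' b' K : ℝ} (hr : r ∈ Set.Icc (0 : ℝ) 1)
    (ha' : a' ∈ Set.Icc (0 : ℝ) 1) (hb' : b' ∈ Set.Icc (0 : ℝ) 1)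
    (ha : |a - a'| ≤ K) (hb : |b - b'| ≤ K) :
    |(r * a + (1 - r) * b) - (s * a' + (1 - s) * b')| ≤ |r - s| + K := by
  have hdiff : |a' - b'| ≤ 1 := by
    simpa using abs_sub_le_of_le_of_le ha'.1 ha'.2 hb'.1 hb'.2
  calc |(r * a + (1 - r) * b) - (s * a' + (1 - s) * b')|
      = |(r - s) * (a' - b') + (r * (a - a') + (1 - r) * (b - b'))| := by congr 1; ring
    _ ≤ |r - s| * |a' - b'| + (r * |a - a'| + (1 - r) * |b - b'|) := by
        refine (abs_add_le _ _).trans (add_le_add (abs_mul _ _).le ((abs_add_le _ _).trans ?_))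
        rw [abs_mul, abs_mul, abs_of_nonneg hr.1, abs_of_nonneg (sub_nonneg.2 hr.2)]
    _ ≤ |r - s| * 1 + (r * K + (1 - r) * K) := by
        have := sub_nonneg.2 hr.2
        have := hr.1
        gcongr
    _ = |r - s| + K := by ring

namespace Bspl

variable {T : ℤ → ℝ} {x y : ℝ}

theorem one_ne_zero_iff {j : ℤ} : Bspl T 1 j x ≠ 0 ↔
    T (j - 1) ≤ x ∧ (x < T j ∨ (x = 1 ∧ T j = 1 ∧ T (j - 1) < 1)) := by
  rw [Bspl, ne_eq, ite_eq_right_iff]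
  simp only [one_ne_zero, imp_false, not_not]

theorem exists_one_ne_zero {m : ℕ} {j : ℤ} (h : Bspl T m j x ≠ 0) :
    ∃ i, j - m < i ∧ i ≤ j ∧ Bspl T 1 i x ≠ 0 := by
  induction m generalizing j with
  | zero => simp [Bspl] at h
  | succ n ih =>
    cases n with
    | zero => exact ⟨j, by simp, le_rfl, h⟩
    | succ n =>
      have hor : Bspl T (n + 1) (j - 1) x ≠ 0 ∨ Bspl T (n + 1) j x ≠ 0 := by
        by_contra! hzero
        simp [Bspl, hzero] at h
      obtain h' | h' := hor <;>
      · obtain ⟨i, hlt, hle, hi⟩ := ih h'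
        exact ⟨i, by push_cast at hlt ⊢; omega, by omega, hi⟩

theorem mem_Icc_and_lt_of_ne_zero (hT : Monotone T) {m : ℕ} {j : ℤ} (h : Bspl T m j x ≠ 0) :
    x ∈ Set.Icc (T (j - m)) (T j) ∧ T (j - m) < T j := by
  obtain ⟨i, hlt, hle, hi⟩ := exists_one_ne_zero h
  have hleft : T (j - m) ≤ T (i - 1) := hT (by omega)
  have hright : T i ≤ T j := hT hle
  obtain ⟨hx, hx' | ⟨rfl, hi1, hi1'⟩⟩ := one_ne_zero_iff.1 hi
  · exact ⟨⟨hleft.trans hx, hx'.le.trans hright⟩, by linarith⟩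
  · exact ⟨⟨hleft.trans hx, by linarith⟩, by linarith⟩

theorem le_of_one_ne_zero (hT : Monotone T) (hT1 : ∀ i, T i ≤ 1) {i j : ℤ}
    (hi : Bspl T 1 i x ≠ 0) (hj : Bspl T 1 j x ≠ 0) : i ≤ j := by
  by_contra! hlt
  have hle : T j ≤ T (i - 1) := hT (by omega)
  have := hT1 i
  obtain ⟨hxi, hi'⟩ := one_ne_zero_iff.1 hi
  obtain ⟨-, hxj | ⟨rfl, hj1, -⟩⟩ := one_ne_zero_iff.1 hj
  · linarith
  · obtain h | ⟨-, -, h⟩ := hi' <;> linarith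

theorem card_filter_ne_zero_le (hT : Monotone T) (hT1 : ∀ i, T i ≤ 1) (m : ℕ) (x : ℝ)
    {κ : Type*} [Fintype κ] {e : κ → ℤ} (he : Function.Injective e) :
    (Finset.univ.filter fun a => Bspl T m (e a) x ≠ 0).card ≤ m := by
  obtain hempty | ⟨a, ha⟩ :=
    (Finset.univ.filter fun a => Bspl T m (e a) x ≠ 0).eq_empty_or_nonempty
  · simp [hempty]
  obtain ⟨i, -, -, hi⟩ := exists_one_ne_zero (Finset.mem_filter_univ a |>.1 ha)
  have hmaps : ∀ b ∈ Finset.univ.filter fun a => Bspl T m (e a) x ≠ 0,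
      e b ∈ Finset.Ico i (i + m) := by
    intro b hb
    obtain ⟨i', hlt, hle, hi'⟩ := exists_one_ne_zero (Finset.mem_filter_univ b |>.1 hb)
    obtain rfl : i = i' :=
      le_antisymm (le_of_one_ne_zero hT hT1 hi hi') (le_of_one_ne_zero hT hT1 hi' hi)
    exact Finset.mem_Ico.2 ⟨hle, by omega⟩
  simpa using Finset.card_le_card_of_injOn e hmaps he.injOn

/-- On the support of `B_{j,n+1}` its two Cox–de Boor weights are a ramp and its complement; the
clamping that makes the ramp Lipschitz on all of `ℝ` happens only where `B_{j,n+1}` vanishes. -/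
theorem succ_eq_ramp_mul_add (hT : Monotone T) (n : ℕ) (j : ℤ) :
    Bspl T (n + 2) j x =
      ramp (T (j - 1 - (n + 1))) (T (j - 1)) x * Bspl T (n + 1) (j - 1) x +
        (1 - ramp (T (j - (n + 1))) (T j) x) * Bspl T (n + 1) j x := by
  have hramp : ∀ i, Bspl T (n + 1) i x ≠ 0 → T (i - (n + 1)) < T i ∧
      ramp (T (i - (n + 1))) (T i) x = (x - T (i - (n + 1))) / (T i - T (i - (n + 1))) := by
    intro i hi
    obtain ⟨hx, hlt⟩ := mem_Icc_and_lt_of_ne_zero hT hi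
    push_cast at hx hlt
    exact ⟨hlt, ramp_of_mem_Icc hx⟩
  rw [Bspl, show j - ((n : ℤ) + 2) = j - 1 - (n + 1) by ring]
  congr 1
  · by_cases h : Bspl T (n + 1) (j - 1) x = 0
    · rw [h, mul_zero, mul_zero]
    · rw [(hramp _ h).2]
  · by_cases h : Bspl T (n + 1) j x = 0
    · rw [h, mul_zero, mul_zero]
    · obtain ⟨hlt, heq⟩ := hramp _ h
      rw [heq, one_sub_div (by linarith), sub_sub_sub_cancel_right]

/-- The tail `∑_{i > j} B_{i,n+1}(x)`, for `x ≤ 1` and knots eventually `1`, of the partition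
of unity by B-splines of order `n + 1`, encoded by the recursion which the Cox–de Boor recursion
induces on these sums. A knot at `1` does not count as passed at `x = 1`, matching `B_{j,1}`. -/
noncomputable def tail (T : ℤ → ℝ) : ℕ → ℤ → ℝ → ℝ
  | 0, j, x => if T j ≤ x ∧ T j < 1 then 1 else 0
  | n + 1, j, x =>
      ramp (T (j - (n + 1))) (T j) x * tail T n (j - 1) x +
        (1 - ramp (T (j - (n + 1))) (T j) x) * tail T n j x

theorem tail_mem_Icc (T : ℤ → ℝ) (n : ℕ) (j : ℤ) (x : ℝ) : tail T n j x ∈ Set.Icc (0 : ℝ) 1 := by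
  induction n generalizing j with
  | zero =>
    rw [tail]
    split_ifs <;> simp
  | succ n ih =>
    have hr := ramp_mem_Icc (T (j - (n + 1))) (T j) x
    exact convex_Icc 0 1 (ih (j - 1)) (ih j) hr.1 (sub_nonneg.2 hr.2) (add_sub_cancel _ _)

theorem one_eq_tail_sub_tail (hT : Monotone T) (hT1 : ∀ i, T i ≤ 1) (hx : x ≤ 1) (j : ℤ) :
    Bspl T 1 j x = tail T 0 (j - 1) x - tail T 0 j x := by
  have hle : T (j - 1) ≤ T j := hT (by omega)
  have := hT1 j
  rw [Bspl, tail, tail]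
  grind

theorem eq_tail_sub_tail (hT : Monotone T) (hT1 : ∀ i, T i ≤ 1) (hx : x ≤ 1) (n : ℕ) (j : ℤ) :
    Bspl T (n + 1) j x = tail T n (j - 1) x - tail T n j x := by
  induction n generalizing j with
  | zero => exact one_eq_tail_sub_tail hT hT1 hx j
  | succ n ih =>
    rw [succ_eq_ramp_mul_add hT, ih, ih, tail, tail]
    ring

theorem abs_le_one (hT : Monotone T) (hT1 : ∀ i, T i ≤ 1) (hx : x ≤ 1) (m : ℕ) (j : ℤ) :
    |Bspl T m j x| ≤ 1 := by
  cases m with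
  | zero => simp [Bspl]
  | succ n =>
    obtain ⟨h0, h1⟩ := tail_mem_Icc T n (j - 1) x
    obtain ⟨h0', h1'⟩ := tail_mem_Icc T n j x
    rw [eq_tail_sub_tail hT hT1 hx]
    simpa using abs_sub_le_of_le_of_le h0 h1 h0' h1'

theorem tail_one_eq_ramp {j : ℤ} (hlt : T (j - 1) < T j) (hj : T j ≤ 1) :
    tail T 1 j x = ramp (T (j - 1)) (T j) x := by
  simp only [tail, Nat.cast_zero, zero_add]
  obtain hx0 | hx0 := lt_or_ge x (T (j - 1))
  · simp [ramp_of_le hlt.le hx0.le, not_le.2 hx0, not_le.2 (hx0.trans hlt)]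
  obtain hx1 | hx1 := lt_or_ge x (T j)
  · simp [hx0, hlt.trans_le hj, not_le.2 hx1]
  · simp [ramp_of_ge hlt hx1, hx0, hlt.trans_le hj]

end Bspl

/-- Knot sequences in `[0, 1]` indexed by `ℤ` whose consecutive knots are at distance at least `δ`,
except that the boundary knots `0` and `1` may be repeated. -/
structure IsClampedKnots (T : ℤ → ℝ) (δ : ℝ) : Prop where
  pos : 0 < δ
  mem_Icc : ∀ i, T i ∈ Set.Icc (0 : ℝ) 1
  step : ∀ i, T i + δ ≤ T (i + 1) ∨ (T i = T (i + 1) ∧ (T i = 0 ∨ T i = 1))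

namespace IsClampedKnots

variable {T : ℤ → ℝ} {δ x y : ℝ}

theorem monotone (hT : IsClampedKnots T δ) : Monotone T :=
  monotone_int_of_le_succ fun i => by
    have := hT.pos
    obtain h | ⟨h, -⟩ := hT.step i <;> linarith

theorem eq_or_add_le (hT : IsClampedKnots T δ) {i j : ℤ} (hij : i ≤ j) :
    T i = T j ∨ T i + δ ≤ T j := by
  induction j, hij using Int.leInduction with
  | base => exact Or.inl rfl
  | succ j _ ih =>
    have hle : T j ≤ T (j + 1) := hT.monotone (by omega)
    obtain heq | hgap := ih
    · rw [heq]
      exact (hT.step j).symm.imp_left And.left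
    · exact Or.inr (hgap.trans hle)

theorem abs_tail_one_sub_le (hT : IsClampedKnots T δ) (hx : x ∈ Set.Icc (0 : ℝ) 1)
    (hy : y ∈ Set.Icc (0 : ℝ) 1) (j : ℤ) :
    |Bspl.tail T 1 j x - Bspl.tail T 1 j y| ≤ |x - y| / δ := by
  have hpos := hT.pos
  have hstep := hT.step (j - 1)
  rw [sub_add_cancel] at hstep
  obtain hgap | ⟨heq, hend⟩ := hstep
  · have hlt : T (j - 1) < T j := by linarith
    rw [Bspl.tail_one_eq_ramp hlt (hT.mem_Icc j).2,
      Bspl.tail_one_eq_ramp hlt (hT.mem_Icc j).2]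
    exact abs_ramp_sub_ramp_le hpos (Or.inr hgap) x y
  · have hconst : Bspl.tail T 1 j x = Bspl.tail T 1 j y := by
      obtain h | h := hend <;> rw [h] at heq <;> simp [Bspl.tail, h, ← heq, hx.1, hy.1]
    rw [hconst, sub_self, abs_zero]
    positivity

theorem abs_tail_sub_le (hT : IsClampedKnots T δ) (hx : x ∈ Set.Icc (0 : ℝ) 1)
    (hy : y ∈ Set.Icc (0 : ℝ) 1) (n : ℕ) (j : ℤ) :
    |Bspl.tail T (n + 1) j x - Bspl.tail T (n + 1) j y| ≤ (n + 1) * (|x - y| / δ) := by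
  induction n generalizing j with
  | zero => simpa using hT.abs_tail_one_sub_le hx hy j
  | succ n ih =>
    have hramp := abs_ramp_sub_ramp_le hT.pos
      (hT.eq_or_add_le (show j - ((n + 1 : ℕ) + 1) ≤ j by omega)) x y
    rw [Bspl.tail, Bspl.tail]
    refine (abs_convexComb_sub_convexComb_le (ramp_mem_Icc _ _ _) (Bspl.tail_mem_Icc _ _ _ _)
      (Bspl.tail_mem_Icc _ _ _ _) (ih (j - 1)) (ih j)).trans ?_
    push_cast at hramp ⊢
    linarith

theorem abs_Bspl_sub_le (hT : IsClampedKnots T δ) (hx : x ∈ Set.Icc (0 : ℝ) 1)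
    (hy : y ∈ Set.Icc (0 : ℝ) 1) {m : ℕ} (hm : 2 ≤ m) (j : ℤ) :
    |Bspl T m j x - Bspl T m j y| ≤ 2 * (m - 1) * (|x - y| / δ) := by
  obtain ⟨n, rfl⟩ := Nat.exists_eq_add_of_le' hm
  have hT1 i := (hT.mem_Icc i).2
  rw [Bspl.eq_tail_sub_tail hT.monotone hT1 hx.2, Bspl.eq_tail_sub_tail hT.monotone hT1 hy.2,
    sub_sub_sub_comm]
  refine (abs_sub _ _).trans ((add_le_add (hT.abs_tail_sub_le hx hy n (j - 1))
    (hT.abs_tail_sub_le hx hy n j)).trans_eq ?_)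
  push_cast
  ring

theorem sum_sq_prod_Bspl_sub_le {ι : Type*} [Fintype ι] [DecidableEq ι] {κ : ι → Type*}
    [∀ k, Fintype (κ k)]
    {T : ι → ℤ → ℝ} {δ x y : ι → ℝ} {m : ι → ℕ} (hT : ∀ k, IsClampedKnots (T k) (δ k))
    (hx : ∀ k, x k ∈ Set.Icc (0 : ℝ) 1) (hy : ∀ k, y k ∈ Set.Icc (0 : ℝ) 1) (hm : ∀ k, 2 ≤ m k)
    {e : ∀ k, κ k → ℤ} (he : ∀ k, Function.Injective (e k)) :
    ∑ j : ∀ k, κ k, (∏ k, Bspl (T k) (m k) (e k (j k)) (x k) -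
        ∏ k, Bspl (T k) (m k) (e k (j k)) (y k)) ^ 2 ≤
      2 * (∏ k, (m k : ℝ)) *
        ((∑ k, (2 * ((m k : ℝ) - 1) / δ k) ^ 2) * ∑ k, (x k - y k) ^ 2) := by
  have hmono k := (hT k).monotone
  have hT1 k i := ((hT k).mem_Icc i).2
  have hlip k (i : κ k) : |Bspl (T k) (m k) (e k i) (x k) - Bspl (T k) (m k) (e k i) (y k)| ≤
      2 * ((m k : ℝ) - 1) / δ k * |x k - y k| :=
    ((hT k).abs_Bspl_sub_le (hx k) (hy k) (hm k) _).trans_eq (by ring)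
  calc _ ≤ 2 * (∏ k, (m k : ℝ)) * (∑ k, 2 * ((m k : ℝ) - 1) / δ k * |x k - y k|) ^ 2 :=
        sum_sq_prod_sub_prod_le (fun k i => Bspl (T k) (m k) (e k i) (x k))
          (fun k i => Bspl (T k) (m k) (e k i) (y k)) m _
          (fun k _ => Bspl.abs_le_one (hmono k) (hT1 k) (hx k).2 _ _)
          (fun k _ => Bspl.abs_le_one (hmono k) (hT1 k) (hy k).2 _ _)
          (fun k => Bspl.card_filter_ne_zero_le (hmono k) (hT1 k) _ _ (he k))
          (fun k => Bspl.card_filter_ne_zero_le (hmono k) (hT1 k) _ _ (he k)) hlip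
    _ ≤ _ := by
      gcongr
      simpa only [sq_abs] using Finset.sum_mul_sq_le_sq_mul_sq Finset.univ
        (fun k => 2 * ((m k : ℝ) - 1) / δ k) fun k => |x k - y k|

end IsClampedKnots

namespace KnotSeq

variable {ks : KnotSeq} {C₀ δ x y : ℝ}

theorem T_of_nonpos {i : ℤ} (hi : i ≤ 0) : ks.T i = 0 :=
  if_pos hi

theorem T_of_ge {i : ℤ} (hi : ks.N + 1 ≤ i) : ks.T i = 1 := by
  rw [T, if_neg (by omega), if_pos hi]

theorem T_natCast {l : ℕ} (hl : l ≤ ks.N + 1) : ks.T l = ks.t l := by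
  obtain rfl | hpos := l.eq_zero_or_pos
  · rw [T_of_nonpos (by simp), ks.t0]
  obtain rfl | hlt := hl.eq_or_lt
  · rw [T_of_ge (by simp), ks.tN]
  · rw [T, if_neg (by omega), if_neg (by omega), Int.toNat_natCast]

theorem T_add_le_T_succ (hgap : ∀ l < ks.N + 1, δ ≤ ks.t (l + 1) - ks.t l) {i : ℤ} (hi : 0 ≤ i)
    (hiN : i ≤ ks.N) : ks.T i + δ ≤ ks.T (i + 1) := by
  lift i to ℕ using hi
  have hsucc := ks.T_natCast (l := i + 1) (by omega)
  push_cast at hsucc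
  rw [T_natCast (by omega), hsucc]
  linarith [hgap i (by omega)]

theorem isClampedKnots (hδ : 0 < δ) (hgap : ∀ l < ks.N + 1, δ ≤ ks.t (l + 1) - ks.t l) :
    IsClampedKnots ks.T δ := by
  have hstep : ∀ i, ks.T i + δ ≤ ks.T (i + 1) ∨
      (ks.T i = ks.T (i + 1) ∧ (ks.T i = 0 ∨ ks.T i = 1)) := by
    intro i
    obtain hi | hi := lt_or_ge i 0
    · simp [T_of_nonpos hi.le, T_of_nonpos (show i + 1 ≤ 0 by omega)]
    obtain hiN | hiN := le_or_gt i ks.N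
    · exact Or.inl (T_add_le_T_succ hgap hi hiN)
    · simp [T_of_ge (show (ks.N : ℤ) + 1 ≤ i by omega),
        T_of_ge (show (ks.N : ℤ) + 1 ≤ i + 1 by omega)]
  have hmono : Monotone ks.T := monotone_int_of_le_succ fun i => by
    obtain h | ⟨h, -⟩ := hstep i <;> linarith
  refine ⟨hδ, fun i => ⟨?_, ?_⟩, hstep⟩
  · exact (T_of_nonpos (min_le_right i 0)).symm.le.trans (hmono (min_le_left i 0))
  · exact (hmono (le_max_left i (ks.N + 1))).trans (T_of_ge (le_max_right _ _)).le

theorem one_le_mesh_mul (ks : KnotSeq) : 1 ≤ ks.mesh * (ks.N + 1) := by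
  have hgap : ∀ l ∈ Finset.range (ks.N + 1), ks.t (l + 1) - ks.t l ≤ ks.mesh := fun l hl =>
    Finset.le_sup' (fun l => ks.t l - ks.t (l - 1))
      (Finset.mem_Icc.2 ⟨by omega, Finset.mem_range.1 hl⟩ : l + 1 ∈ Finset.Icc 1 (ks.N + 1))
  calc (1 : ℝ) = ∑ l ∈ Finset.range (ks.N + 1), (ks.t (l + 1) - ks.t l) := by
        rw [Finset.sum_range_sub, ks.tN, ks.t0, sub_zero]
    _ ≤ (Finset.range (ks.N + 1)).card • ks.mesh := Finset.sum_le_card_nsmul _ _ _ hgap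
    _ = ks.mesh * (ks.N + 1) := by
        rw [Finset.card_range, nsmul_eq_mul, Nat.cast_succ, mul_comm]

namespace QuasiUniform

theorem one_le_mul_gap (h : ks.QuasiUniform C₀) {l : ℕ} (hl : l < ks.N + 1) :
    1 ≤ C₀ * (ks.N + 1) * (ks.t (l + 1) - ks.t l) := by
  have hl' : ks.mesh ≤ C₀ * (ks.t (l + 1) - ks.t l) :=
    h (l + 1) (Finset.mem_Icc.2 ⟨by omega, hl⟩)
  calc 1 ≤ ks.mesh * (ks.N + 1) := ks.one_le_mesh_mul
    _ ≤ C₀ * (ks.t (l + 1) - ks.t l) * (ks.N + 1) := by gcongr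
    _ = C₀ * (ks.N + 1) * (ks.t (l + 1) - ks.t l) := by ring

theorem isClampedKnots (h : ks.QuasiUniform C₀) :
    IsClampedKnots ks.T (C₀ * (ks.N + 1))⁻¹ := by
  have hpos : 0 < C₀ * (ks.N + 1) :=
    pos_of_mul_pos_left (zero_lt_one.trans_le (h.one_le_mul_gap ks.N.succ_pos))
      (sub_nonneg.2 (ks.mono 0 ks.N.succ_pos).le)
  exact KnotSeq.isClampedKnots (inv_pos.2 hpos) fun l hl =>
    (inv_le_iff_one_le_mul₀' hpos).2 (h.one_le_mul_gap hl)

end QuasiUniform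

end KnotSeq

/-- For orders `m_k ≥ 2` and quasi-uniform knot sequences (constant
`C₀`) there is a constant `C > 0` depending only on `m`, `d` and `C₀` such that for all
`x, y ∈ [0,1]^d`:
`Σ_j |Π_k B_{j_k,m_k}(x_k) − Π_k B_{j_k,m_k}(y_k)|² ≤ C (Σ_k J_k'²) ‖x − y‖²`. -/
theorem statement12 (d : ℕ) (hd : 1 ≤ d) (m : Fin d → ℕ) (hm : ∀ k, 2 ≤ m k)
    (C₀ : ℝ) (hC₀ : 1 ≤ C₀) :
    ∃ C > (0 : ℝ), ∀ (ks : Fin d → KnotSeq), (∀ k, (ks k).QuasiUniform C₀) →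
      ∀ x y : Fin d → ℝ, (∀ k, x k ∈ Set.Icc (0 : ℝ) 1) → (∀ k, y k ∈ Set.Icc (0 : ℝ) 1) →
        ∑ j : (k : Fin d) → Fin ((ks k).N + m k),
            (∏ k, Bspl (ks k).T (m k) (((j k : ℕ) : ℤ) + 1) (x k) -
              ∏ k, Bspl (ks k).T (m k) (((j k : ℕ) : ℤ) + 1) (y k)) ^ 2 ≤
          C * (∑ k, (((ks k).N + m k : ℕ) : ℝ) ^ 2) * ∑ k, (x k - y k) ^ 2 := by
  have hm1 k : 1 ≤ (m k : ℝ) := Nat.one_le_cast.2 (one_le_two.trans (hm k))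
  have hprod : 0 < ∏ k, (m k : ℝ) := Finset.prod_pos fun k _ => one_pos.trans_le (hm1 k)
  have hle k : (m k : ℝ) ≤ ∑ k, (m k : ℝ) :=
    Finset.single_le_sum (fun k _ => zero_le_one.trans (hm1 k)) (Finset.mem_univ k)
  have hsum : 0 < ∑ k, (m k : ℝ) := one_pos.trans_le ((hm1 ⟨0, hd⟩).trans (hle _))
  refine ⟨2 * (∏ k, (m k : ℝ)) * (2 * (∑ k, (m k : ℝ)) * C₀) ^ 2, by positivity,
    fun ks hks x y hx hy => ?_⟩
  have hlip k : (2 * ((m k : ℝ) - 1) / (C₀ * ((ks k).N + 1))⁻¹) ^ 2 ≤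
      (2 * (∑ k, (m k : ℝ)) * C₀) ^ 2 * (((ks k).N + m k : ℕ) : ℝ) ^ 2 := by
    have hm0 := sub_nonneg.2 (hm1 k)
    rw [div_inv_eq_mul, ← mul_assoc, ← mul_pow, Nat.cast_add]
    gcongr
    exacts [(sub_le_self _ zero_le_one).trans (hle k), hm1 k]
  calc _ ≤ _ := IsClampedKnots.sum_sq_prod_Bspl_sub_le (fun k => (hks k).isClampedKnots) hx hy hm
        fun k => (add_left_injective 1).comp (Nat.cast_injective.comp Fin.val_injective)
    _ ≤ 2 * (∏ k, (m k : ℝ)) * ((∑ k, (2 * (∑ k, (m k : ℝ)) * C₀) ^ 2 *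
        (((ks k).N + m k : ℕ) : ℝ) ^ 2) * ∑ k, (x k - y k) ^ 2) := by gcongr with k; exact hlip k
    _ = _ := by rw [← Finset.mul_sum]; ring
end
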